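/- Let 1<p<∞. There exists a constant C_p>0 such that for every smooth, divergence-free, axially symmetric vector field u = u^r(r,z)e_r + u^θ(r,z)e_θ + u^z(r,z)e_z on ℝ³ with sufficient decay, writing w^θ = ∂_z u^r − ∂_r u^z for the angular component of the vorticity ∇×u and b = u^r e_r + u^z e_z for the swirl-free part of u, one has ‖∇b‖_{L^p(ℝ³)} ≤ C_p ‖w^θ‖_{L^p(ℝ³)} and ‖∇²b‖_{L^p(ℝ³)} ≤ C_p ( ‖∇w^θ‖_{L^p(ℝ³)} + ‖w^θ/r‖_{L^p(ℝ³)} ). -/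

import Mathlib

open MeasureTheory Set ENNReal

noncomputable section

abbrev E3 : Type := EuclideanSpace ℝ (Fin 3)

def pd (i : Fin 3) (f : E3 → ℝ) (x : E3) : ℝ :=
  fderiv ℝ f x (EuclideanSpace.single i 1)

/-- Distance to the `x₃`-axis. -/
def rad (x : E3) : ℝ := Real.sqrt (x 0 ^ 2 + x 1 ^ 2)

/-- Partial derivative in the `r` variable of a function of `(r, z)`. -/
def pdr (f : ℝ → ℝ → ℝ) (r z : ℝ) : ℝ := deriv (fun r' => f r' z) r

/-- Partial derivative in the `z` variable of a function of `(r, z)`. -/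
def pdz (f : ℝ → ℝ → ℝ) (r z : ℝ) : ℝ := deriv (fun z' => f r z') z

/-- A vector field is axially symmetric with cylindrical components `vr, vθ, vz`. -/
def AxisymVec (v : E3 → E3) (vr vθ vz : ℝ → ℝ → ℝ) : Prop :=
  ∀ x : E3, rad x ≠ 0 →
    v x 0 = vr (rad x) (x 2) * (x 0 / rad x) - vθ (rad x) (x 2) * (x 1 / rad x) ∧
    v x 1 = vr (rad x) (x 2) * (x 1 / rad x) + vθ (rad x) (x 2) * (x 0 / rad x) ∧
    v x 2 = vz (rad x) (x 2)

/-- The swirl-free part `b = u^r e_r + u^z e_z` of an axially symmetric field,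
built from the cylindrical components `ur, uz`. -/
def swirlFreePart (ur uz : ℝ → ℝ → ℝ) (x : E3) : E3 :=
  (WithLp.equiv 2 (Fin 3 → ℝ)).symm
    ![ur (rad x) (x 2) * (x 0 / rad x),
      ur (rad x) (x 2) * (x 1 / rad x),
      uz (rad x) (x 2)]

/-- The angular component `w^θ = ∂_z u^r − ∂_r u^z` of the vorticity, as a function
on `ℝ³`. -/
def wTheta (ur uz : ℝ → ℝ → ℝ) (x : E3) : ℝ :=
  pdz ur (rad x) (x 2) - pdr uz (rad x) (x 2)

/-- The heat kernel on `ℝ³`. -/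
def heatKer (t : ℝ) (z : E3) : ℝ :=
  (4 * Real.pi * t) ^ (-(3 / 2) : ℝ) * Real.exp (-‖z‖ ^ 2 / (4 * t))

/-- The heat semigroup on `ℝ³`. -/
def heat (t : ℝ) (f : E3 → ℝ) (x : E3) : ℝ := ∫ y, heatKer t (x - y) * f y

lemma heatKer_pos {t : ℝ} (ht : 0 < t) (z : E3) : 0 < heatKer t z := by
  unfold heatKer; positivity

lemma heatKer_neg (t : ℝ) (z : E3) : heatKer t (-z) = heatKer t z := by
  simp [heatKer]

lemma heatKer_sub_comm (t : ℝ) (x y : E3) : heatKer t (x - y) = heatKer t (y - x) := by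
  rw [← heatKer_neg, neg_sub]

lemma heatKer_le {t : ℝ} (ht : 0 < t) (z : E3) :
    heatKer t z ≤ (4 * Real.pi * t) ^ (-(3 / 2) : ℝ) := by
  unfold heatKer
  refine mul_le_of_le_one_right (by positivity) (Real.exp_le_one_iff.2 ?_)
  rw [neg_div]
  exact neg_nonpos.2 (by positivity)

lemma continuous_heatKer (t : ℝ) : Continuous (heatKer t) := by
  unfold heatKer; fun_prop

lemma measurable_uncurry_heatKer : Measurable (Function.uncurry heatKer) := by
  unfold heatKer Function.uncurry; fun_prop

lemma integral_heatKer {t : ℝ} (ht : 0 < t) : ∫ z, heatKer t z = 1 := by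
  unfold heatKer
  rw [integral_const_mul]
  have h := GaussianFourier.integral_rexp_neg_mul_sq_norm (V := E3) (b := 1 / (4 * t))
    (by positivity)
  have e : ∀ z : E3, -‖z‖ ^ 2 / (4 * t) = -(1 / (4 * t)) * ‖z‖ ^ 2 := fun z => by ring
  simp_rw [e, h, finrank_euclideanSpace_fin]
  have : Real.pi / (1 / (4 * t)) = 4 * Real.pi * t := by field_simp
  rw [this, ← Real.rpow_add (by positivity)]
  norm_num

lemma integrable_heatKer {t : ℝ} (ht : 0 < t) : Integrable (heatKer t) := by
  by_contra h
  have := integral_heatKer ht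
  rw [integral_undef h] at this
  exact zero_ne_one this

lemma integrable_heatKer_sub {t : ℝ} (ht : 0 < t) (x : E3) :
    Integrable (fun y => heatKer t (x - y)) :=
  (integrable_heatKer ht).comp_sub_left x

lemma integral_heatKer_sub {t : ℝ} (ht : 0 < t) (x : E3) :
    ∫ y, heatKer t (x - y) = 1 := by
  rw [integral_sub_left_eq_self (heatKer t) volume x, integral_heatKer ht]

lemma lintegral_heatKer_sub {t : ℝ} (ht : 0 < t) (x : E3) :
    ∫⁻ y, ENNReal.ofReal (heatKer t (x - y)) = 1 := by
  rw [← ofReal_integral_eq_lintegral_ofReal (integrable_heatKer_sub ht x)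
    (Filter.Eventually.of_forall fun y => (heatKer_pos ht _).le), integral_heatKer_sub ht]
  simp

lemma integral_heatKer_mul_heatKer {s t : ℝ} (hs : 0 < s) (ht : 0 < t) (x z : E3) :
    ∫ y, heatKer s (x - y) * heatKer t (y - z) = heatKer (s + t) (x - z) := by
  -- complete the square around the weighted barycentre of `x` and `z`
  have key : ∀ y : E3, heatKer s (x - y) * heatKer t (y - z) =
      heatKer (s + t) (x - z) *
        heatKer (s * t / (s + t)) (((t / (s + t)) • x + (s / (s + t)) • z) - y) := by
    intro y
    unfold heatKer
    have hst : 0 < s + t := by positivity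
    have e1 : -‖x - y‖ ^ 2 / (4 * s) + -‖y - z‖ ^ 2 / (4 * t) =
        -‖x - z‖ ^ 2 / (4 * (s + t)) +
          -‖((t / (s + t)) • x + (s / (s + t)) • z) - y‖ ^ 2 / (4 * (s * t / (s + t))) := by
      simp only [EuclideanSpace.norm_sq_eq, Real.norm_eq_abs, sq_abs, Fin.sum_univ_three,
        PiLp.sub_apply, PiLp.add_apply, PiLp.smul_apply, smul_eq_mul]
      field_simp
      ring
    have e2 : (4 * Real.pi * s) ^ (-(3 / 2) : ℝ) * (4 * Real.pi * t) ^ (-(3 / 2) : ℝ) =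
        (4 * Real.pi * (s + t)) ^ (-(3 / 2) : ℝ) *
          (4 * Real.pi * (s * t / (s + t))) ^ (-(3 / 2) : ℝ) := by
      rw [← Real.mul_rpow (by positivity) (by positivity),
        ← Real.mul_rpow (by positivity) (by positivity)]
      congr 1
      field_simp
    calc _ = ((4 * Real.pi * s) ^ (-(3 / 2) : ℝ) * (4 * Real.pi * t) ^ (-(3 / 2) : ℝ)) *
          Real.exp (-‖x - y‖ ^ 2 / (4 * s) + -‖y - z‖ ^ 2 / (4 * t)) := by
            rw [Real.exp_add]; ring
      _ = _ := by rw [e1, e2, Real.exp_add]; ring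
  simp_rw [key]
  rw [integral_const_mul, integral_heatKer_sub (by positivity), mul_one]

lemma heatKer_sqrt_smul {h : ℝ} (hh : 0 < h) (z : E3) :
    heatKer h (Real.sqrt h • z) = h ^ (-(3 / 2) : ℝ) * heatKer 1 z := by
  unfold heatKer
  rw [norm_smul, mul_pow, Real.norm_eq_abs, sq_abs, Real.sq_sqrt hh.le,
    Real.mul_rpow (by positivity) hh.le]
  have : -(h * ‖z‖ ^ 2) / (4 * h) = -‖z‖ ^ 2 / (4 * 1) := by field_simp
  rw [this]
  ring_nf

lemma integrable_heatKer_mul {t : ℝ} (ht : 0 < t) (x : E3) {f : E3 → ℝ}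
    (hf : AEStronglyMeasurable f) {M : ℝ} (hM : ∀ y, |f y| ≤ M) :
    Integrable (fun y => heatKer t (x - y) * f y) :=
  (integrable_heatKer_sub ht x).mul_bdd (c := M) hf (Filter.Eventually.of_forall hM)

lemma integrable_heatKer_mul_of_integrable {t : ℝ} (ht : 0 < t) (x : E3) {f : E3 → ℝ}
    (hf : Integrable f) :
    Integrable (fun y => heatKer t (x - y) * f y) :=
  hf.bdd_mul (c := (4 * Real.pi * t) ^ (-(3 / 2) : ℝ))
    ((continuous_heatKer t).comp (by fun_prop)).aestronglyMeasurable
    (Filter.Eventually.of_forall fun y => by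
      rw [Real.norm_eq_abs, abs_of_pos (heatKer_pos ht _)]; exact heatKer_le ht _)

lemma abs_heat_le {t : ℝ} (ht : 0 < t) {f : E3 → ℝ} {M : ℝ} (hM : ∀ y, |f y| ≤ M) (x : E3) :
    |heat t f x| ≤ M := by
  have := norm_integral_le_of_norm_le ((integrable_heatKer_sub ht x).mul_const M)
    (f := fun y => heatKer t (x - y) * f y) (Filter.Eventually.of_forall fun y => by
      rw [norm_mul, Real.norm_eq_abs, abs_of_pos (heatKer_pos ht _)]
      exact mul_le_mul_of_nonneg_left (hM y) (heatKer_pos ht _).le)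
  rwa [integral_mul_const, integral_heatKer_sub ht, one_mul] at this

lemma abs_heat_le_integral {t : ℝ} (ht : 0 < t) {f : E3 → ℝ} (hf : Integrable f) (x : E3) :
    |heat t f x| ≤ (4 * Real.pi * t) ^ (-(3 / 2) : ℝ) * ∫ y, |f y| := by
  rw [← integral_const_mul]
  exact norm_integral_le_of_norm_le (f := fun y => heatKer t (x - y) * f y)
    (hf.abs.const_mul _) (Filter.Eventually.of_forall fun y => by
      rw [norm_mul, Real.norm_eq_abs, abs_of_pos (heatKer_pos ht _)]
      exact mul_le_mul_of_nonneg_right (heatKer_le ht _) (norm_nonneg _))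

lemma integrable_prod_heatKer_mul {t : ℝ} (ht : 0 < t) {f : E3 → ℝ} (hf : Integrable f) :
    Integrable (fun q : E3 × E3 => heatKer t (q.1 - q.2) * f q.2) (volume.prod volume) := by
  rw [integrable_prod_iff']
  · refine ⟨Filter.Eventually.of_forall fun y =>
      ((integrable_heatKer ht).comp_sub_right y).mul_const (f y), ?_⟩
    have e : ∀ y, ∫ x, ‖heatKer t (x - y) * f y‖ = |f y| := by
      intro y
      simp_rw [norm_mul, integral_mul_const, Real.norm_eq_abs, abs_of_pos (heatKer_pos ht _)]
      rw [integral_sub_right_eq_self (heatKer t) y, integral_heatKer ht, one_mul]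
    simp_rw [e]
    exact hf.abs
  · exact ((continuous_heatKer t).comp (by fun_prop)).aestronglyMeasurable.mul
      hf.aestronglyMeasurable.comp_snd

lemma integrable_heat {t : ℝ} (ht : 0 < t) {f : E3 → ℝ} (hf : Integrable f) :
    Integrable (heat t f) :=
  (integrable_prod_heatKer_mul ht hf).integral_prod_left

/-- The semigroup property. -/
lemma heat_heat {s t : ℝ} (hs : 0 < s) (ht : 0 < t) {f : E3 → ℝ} (hf : Integrable f) :
    heat s (heat t f) = heat (s + t) f := by
  ext x
  unfold heat
  have h1 : ∀ y, heatKer s (x - y) * ∫ z, heatKer t (y - z) * f z =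
      ∫ z, heatKer s (x - y) * (heatKer t (y - z) * f z) := fun y => (integral_const_mul _ _).symm
  simp_rw [h1]
  rw [integral_integral_swap]
  · congr 1
    ext z
    simp_rw [← mul_assoc]
    rw [integral_mul_const, integral_heatKer_mul_heatKer hs ht]
  · exact (integrable_prod_heatKer_mul ht hf).bdd_mul (c := (4 * Real.pi * s) ^ (-(3 / 2) : ℝ))
      (f := fun q : E3 × E3 => heatKer s (x - q.1))
      ((continuous_heatKer s).comp (by fun_prop)).aestronglyMeasurable
      (Filter.Eventually.of_forall fun y => by
        rw [Real.norm_eq_abs, abs_of_pos (heatKer_pos hs _)]; exact heatKer_le hs _)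

/-- The heat semigroup is symmetric. -/
lemma integral_heat_mul {t : ℝ} (ht : 0 < t) {f g : E3 → ℝ} (hf : Integrable f)
    (hg : AEStronglyMeasurable g) {M : ℝ} (hM : ∀ y, |g y| ≤ M) :
    ∫ x, heat t f x * g x = ∫ x, f x * heat t g x := by
  unfold heat
  simp_rw [← integral_mul_const, ← integral_const_mul]
  rw [integral_integral_swap]
  · congr 1
    ext x
    congr 1
    ext y
    rw [heatKer_sub_comm]
    ring
  · exact (integrable_prod_heatKer_mul ht hf).mul_bdd (c := M)
      (f := fun q : E3 × E3 => heatKer t (q.1 - q.2) * f q.2)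
      (g := fun q : E3 × E3 => g q.1) hg.comp_fst
      (Filter.Eventually.of_forall fun y => hM _)

lemma heat_eq_integral_sub (t : ℝ) (f : E3 → ℝ) (x : E3) :
    heat t f x = ∫ y, heatKer t y * f (x - y) := by
  unfold heat
  rw [← integral_sub_left_eq_self _ volume x]
  simp

/-- Smooth compactly supported real functions on `ℝ³`. -/
def IsTest (f : E3 → ℝ) : Prop := ContDiff ℝ (⊤ : ℕ∞) f ∧ HasCompactSupport f

lemma continuous_pd {f : E3 → ℝ} (hf : ContDiff ℝ 1 f) (i : Fin 3) : Continuous (pd i f) := by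
  unfold pd
  exact (hf.continuous_fderiv one_ne_zero).clm_apply continuous_const

lemma hasCompactSupport_pd {f : E3 → ℝ} (hf : HasCompactSupport f) (i : Fin 3) :
    HasCompactSupport (pd i f) :=
  (hf.fderiv ℝ).comp_left (g := fun L : E3 →L[ℝ] ℝ => L (EuclideanSpace.single i 1)) (by simp)

lemma IsTest.pd {f : E3 → ℝ} (hf : IsTest f) (i : Fin 3) : IsTest (pd i f) :=
  ⟨(hf.1.fderiv_right (by simp)).clm_apply contDiff_const, hasCompactSupport_pd hf.2 i⟩

lemma IsTest.continuous {f : E3 → ℝ} (hf : IsTest f) : Continuous f := hf.1.continuous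

lemma IsTest.integrable {f : E3 → ℝ} (hf : IsTest f) : Integrable f :=
  hf.continuous.integrable_of_hasCompactSupport hf.2

lemma IsTest.differentiable {f : E3 → ℝ} (hf : IsTest f) : Differentiable ℝ f :=
  hf.1.differentiable (by simp)

lemma exists_abs_le {f : E3 → ℝ} (hf : Continuous f) (hc : HasCompactSupport f) :
    ∃ M, 0 ≤ M ∧ ∀ x, |f x| ≤ M := by
  obtain ⟨M, hM⟩ := hf.bounded_above_of_compact_support hc
  exact ⟨M, (norm_nonneg _).trans (hM 0), hM⟩

lemma integral_mul_pd {φ g : E3 → ℝ} (hφ : ContDiff ℝ 1 φ) (hg : ContDiff ℝ 1 g)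
    (hc : HasCompactSupport g) (i : Fin 3) :
    ∫ x, φ x * pd i g x = -∫ x, pd i φ x * g x := by
  refine integral_mul_fderiv_eq_neg_fderiv_mul_of_integrable ?_ ?_ ?_
    (fun x _ => (hφ.differentiable one_ne_zero) x) (fun x _ => (hg.differentiable one_ne_zero) x)
  · exact ((continuous_pd hφ i).mul hg.continuous).integrable_of_hasCompactSupport hc.mul_left
  · exact (hφ.continuous.mul (continuous_pd hg i)).integrable_of_hasCompactSupport
      (hasCompactSupport_pd hc i).mul_left
  · exact (hφ.continuous.mul hg.continuous).integrable_of_hasCompactSupport hc.mul_left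

lemma contDiffAt_uncurry_heatKer {n : WithTop ℕ∞} {p : ℝ × E3} (hp : 0 < p.1) :
    ContDiffAt ℝ n (Function.uncurry heatKer) p := by
  unfold heatKer Function.uncurry
  refine ContDiffAt.mul ?_ ?_
  · refine ContDiffAt.rpow_const_of_ne (by fun_prop) (by positivity)
  · refine ContDiffAt.exp (ContDiffAt.div ?_ (by fun_prop) (by positivity))
    exact ((contDiff_norm_sq ℝ).comp contDiff_snd).contDiffAt.neg

lemma hasFDerivAt_heat {f : E3 → ℝ} (hf : Continuous f) (hc : HasCompactSupport f)
    {t : ℝ} (ht : 0 < t) (x : E3) :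
    HasFDerivAt (fun p : ℝ × E3 => heat p.1 f p.2)
      (∫ y, f y • fderiv ℝ (Function.uncurry heatKer) (t, x - y)) (t, x) := by
  have hK : ContinuousOn (fun q : (ℝ × E3) × E3 =>
      fderiv ℝ (Function.uncurry heatKer) (q.1.1, q.1.2 - q.2)) {q | 0 < q.1.1} := by
    intro q hq
    have h1 : ContinuousAt (fderiv ℝ (Function.uncurry heatKer)) (q.1.1, q.1.2 - q.2) :=
      (contDiffAt_uncurry_heatKer (n := 1) (p := (q.1.1, q.1.2 - q.2)) hq).continuousAt_fderiv
        one_ne_zero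
    exact (ContinuousAt.comp (f := fun q : (ℝ × E3) × E3 => (q.1.1, q.1.2 - q.2)) h1
      (by fun_prop)).continuousWithinAt
  have hpos : ∀ p ∈ Metric.closedBall (t, x) (t / 2), 0 < p.1 := by
    rintro ⟨a, b⟩ hp
    have h2 : dist a t ≤ t / 2 := (le_max_left _ _).trans hp
    rw [Real.dist_eq] at h2
    have := (abs_le.1 h2).1
    show 0 < a
    linarith
  obtain ⟨C, hC⟩ := ((isCompact_closedBall (t, x)
    (t / 2)).prod hc.isCompact).exists_bound_of_continuousOn
    (hK.mono fun q hq => hpos q.1 hq.1)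
  refine hasFDerivAt_integral_of_dominated_of_fderiv_le
    (F := fun (p : ℝ × E3) y => heatKer p.1 (p.2 - y) * f y)
    (F' := fun p y => f y • fderiv ℝ (Function.uncurry heatKer) (p.1, p.2 - y))
    (bound := fun y => |f y| * C)
    (Metric.closedBall_mem_nhds (t, x) (by positivity : 0 < t / 2)) ?_ ?_ ?_ ?_ ?_ ?_
  · exact Filter.Eventually.of_forall fun p =>
      (((continuous_heatKer p.1).comp (by fun_prop)).mul hf).aestronglyMeasurable
  · exact integrable_heatKer_mul_of_integrable ht x (hf.integrable_of_hasCompactSupport hc)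
  · refine (hf.smul ?_).aestronglyMeasurable
    exact hK.comp_continuous (f := fun y : E3 => ((t, x), y)) (by fun_prop) (fun y => ht)
  · refine Filter.Eventually.of_forall fun y p hp => ?_
    rw [norm_smul, Real.norm_eq_abs]
    by_cases hy : y ∈ tsupport f
    · exact mul_le_mul_of_nonneg_left (hC (p, y) ⟨hp, hy⟩) (abs_nonneg _)
    · simp [image_eq_zero_of_notMem_tsupport hy]
  · exact (hf.integrable_of_hasCompactSupport hc).abs.mul_const C
  · refine Filter.Eventually.of_forall fun y p hp => ?_
    have h1 : HasFDerivAt (Function.uncurry heatKer)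
        (fderiv ℝ (Function.uncurry heatKer) (p.1, p.2 - y)) (p - (0, y)) := by
      have : p - (0, y) = (p.1, p.2 - y) := by ext <;> simp
      rw [this]
      exact ((contDiffAt_uncurry_heatKer (n := 1) (p := (p.1, p.2 - y))
        (hpos p hp)).differentiableAt one_ne_zero).hasFDerivAt
    have h2 := (HasFDerivAt.comp p h1 ((hasFDerivAt_id p).sub_const (0, y))).mul_const (f y)
    simpa [Function.comp_def, Function.uncurry] using h2

lemma fderiv_heat_apply {f : E3 → ℝ} (hf : Continuous f) (hc : HasCompactSupport f)
    {t : ℝ} (ht : 0 < t) (x : E3) (v : ℝ × E3) :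
    (∫ y, f y • fderiv ℝ (Function.uncurry heatKer) (t, x - y)) v =
      ∫ y, f y * fderiv ℝ (Function.uncurry heatKer) (t, x - y) v := by
  rw [ContinuousLinearMap.integral_apply]
  · simp
  · refine Continuous.integrable_of_hasCompactSupport (hf.smul ?_) hc.smul_right
    refine continuous_iff_continuousAt.2 fun y => ?_
    have h1 : ContinuousAt (fderiv ℝ (Function.uncurry heatKer)) (t, x - y) :=
      (contDiffAt_uncurry_heatKer (n := 1) (p := (t, x - y)) ht).continuousAt_fderiv one_ne_zero
    exact ContinuousAt.comp (f := fun y : E3 => (t, x - y)) h1 (by fun_prop)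

lemma contDiff_heatKer {n : WithTop ℕ∞} {t : ℝ} (ht : 0 < t) : ContDiff ℝ n (heatKer t) := by
  refine contDiff_iff_contDiffAt.2 fun z => ?_
  exact ContDiffAt.comp (f := fun z : E3 => (t, z)) z
    (contDiffAt_uncurry_heatKer (p := (t, z)) ht) (by fun_prop)

lemma fderiv_heatKer_space {t : ℝ} (ht : 0 < t) (z : E3) (i : Fin 3) :
    fderiv ℝ (Function.uncurry heatKer) (t, z) (0, EuclideanSpace.single i 1) =
      pd i (heatKer t) z := by
  have h1 : HasFDerivAt (Function.uncurry heatKer) _ (t, z) :=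
    ((contDiffAt_uncurry_heatKer (n := 1) (p := (t, z)) ht).differentiableAt
      one_ne_zero).hasFDerivAt
  have h2 := HasFDerivAt.comp (f := fun z : E3 => (t, z)) z h1 (hasFDerivAt_prodMk_right t z)
  have h3 : fderiv ℝ (heatKer t) z = _ := h2.fderiv
  unfold pd
  rw [h3]
  simp

lemma fderiv_heatKer_time {t : ℝ} (ht : 0 < t) (z : E3) {d : ℝ}
    (hd : HasDerivAt (fun s => heatKer s z) d t) :
    fderiv ℝ (Function.uncurry heatKer) (t, z) (1, 0) = d := by
  have h1 : HasFDerivAt (Function.uncurry heatKer) _ (t, z) :=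
    ((contDiffAt_uncurry_heatKer (n := 1) (p := (t, z)) ht).differentiableAt
      one_ne_zero).hasFDerivAt
  have h2 := (HasFDerivAt.comp (f := fun s : ℝ => (s, z)) t h1
    (hasFDerivAt_prodMk_left t z)).hasDerivAt
  have h3 := h2.unique hd
  simpa using h3

lemma pd_heatKer (t : ℝ) (i : Fin 3) (z : E3) :
    pd i (heatKer t) z = -(z i) / (2 * t) * heatKer t z := by
  have h0 : HasFDerivAt (fun z : E3 => ‖z‖ ^ 2) _ z := (hasStrictFDerivAt_norm_sq z).hasFDerivAt
  have h1 := (((h0.neg).mul_const (4 * t)⁻¹).exp).const_mul ((4 * Real.pi * t) ^ (-(3 / 2) : ℝ))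
  have h2 : HasFDerivAt (heatKer t) _ z := h1
  unfold pd
  rw [h2.fderiv]
  simp [heatKer, div_eq_mul_inv, EuclideanSpace.inner_single_right]
  ring

lemma pd_pd_heatKer {t : ℝ} (ht : 0 < t) (i : Fin 3) (z : E3) :
    pd i (pd i (heatKer t)) z = ((z i) ^ 2 / (4 * t ^ 2) - 1 / (2 * t)) * heatKer t z := by
  have e : pd i (heatKer t) = fun z => -(z i) / (2 * t) * heatKer t z :=
    funext fun z => pd_heatKer t i z
  rw [e]
  have hz : HasFDerivAt (fun z : E3 => z i) (EuclideanSpace.proj i : E3 →L[ℝ] ℝ) z :=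
    (EuclideanSpace.proj i : E3 →L[ℝ] ℝ).hasFDerivAt
  have hk : HasFDerivAt (heatKer t) (fderiv ℝ (heatKer t) z) z :=
    ((contDiff_heatKer (n := 1) ht).differentiable one_ne_zero z).hasFDerivAt
  have h := (hz.neg.mul_const (2 * t)⁻¹).mul hk
  have h' := pd_heatKer t i z
  unfold pd at h' ⊢
  have h2 : HasFDerivAt (fun z : E3 => -(z i) / (2 * t) * heatKer t z) _ z := h
  rw [h2.fderiv]
  simp [h', heatKer]
  field_simp
  ring

lemma hasDerivAt_heatKer {t : ℝ} (ht : 0 < t) (z : E3) :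
    HasDerivAt (fun s => heatKer s z) (∑ i, pd i (pd i (heatKer t)) z) t := by
  have h1 : HasDerivAt (fun s : ℝ => (4 * Real.pi * s) ^ (-(3 / 2) : ℝ))
      ((4 * Real.pi * 1) * (-(3 / 2)) * (4 * Real.pi * t) ^ (-(3 / 2) - 1 : ℝ)) t :=
    ((hasDerivAt_id t).const_mul (4 * Real.pi)).rpow_const (Or.inl (by simp; positivity))
  have h2 : HasDerivAt (fun s : ℝ => Real.exp (-‖z‖ ^ 2 / (4 * s)))
      (Real.exp (-‖z‖ ^ 2 / (4 * t)) * ((0 * (4 * t) - -‖z‖ ^ 2 * (4 * 1)) / (4 * t) ^ 2)) t :=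
    (HasDerivAt.fun_div (hasDerivAt_const t (-‖z‖ ^ 2)) ((hasDerivAt_id t).const_mul 4)
      (by simp; positivity)).exp
  refine (h1.mul h2).congr_deriv ?_
  simp_rw [pd_pd_heatKer ht]
  rw [← Finset.sum_mul, Real.rpow_sub (by positivity), Real.rpow_one]
  simp only [heatKer, EuclideanSpace.norm_sq_eq, Real.norm_eq_abs, sq_abs, Fin.sum_univ_three]
  field_simp
  ring

lemma differentiableAt_heat {f : E3 → ℝ} (hf : Continuous f) (hc : HasCompactSupport f)
    {t : ℝ} (ht : 0 < t) (x : E3) : DifferentiableAt ℝ (heat t f) x :=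
  (HasFDerivAt.comp (f := fun z : E3 => (t, z)) x (hasFDerivAt_heat hf hc ht x)
    (hasFDerivAt_prodMk_right t x)).differentiableAt

lemma pd_comp_sub_left {φ : E3 → ℝ} (hφ : Differentiable ℝ φ) (x y : E3) (i : Fin 3) :
    pd i (fun y => φ (x - y)) y = -pd i φ (x - y) := by
  unfold pd
  have h := HasFDerivAt.comp y (hφ (x - y)).hasFDerivAt ((hasFDerivAt_id y).const_sub x)
  have h' : HasFDerivAt (fun y => φ (x - y)) _ y := h
  rw [h'.fderiv]
  simp

lemma integral_pd_sub_mul {g : E3 → ℝ} (hg : ContDiff ℝ 1 g)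
    (hc : HasCompactSupport g) (x : E3) (i : Fin 3) {φ : E3 → ℝ}
    (hφ : ContDiff ℝ 1 φ) :
    ∫ y, pd i φ (x - y) * g y = ∫ y, φ (x - y) * pd i g y := by
  rw [integral_mul_pd (φ := fun y => φ (x - y)) (hφ.comp (by fun_prop)) hg hc]
  simp_rw [pd_comp_sub_left (hφ.differentiable one_ne_zero), neg_mul, integral_neg, neg_neg]

lemma pd_heat {f : E3 → ℝ} (hf : ContDiff ℝ 1 f) (hc : HasCompactSupport f)
    {t : ℝ} (ht : 0 < t) (x : E3) (i : Fin 3) :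
    pd i (heat t f) x = heat t (pd i f) x := by
  have h1 := HasFDerivAt.comp (f := fun z : E3 => (t, z)) x
    (hasFDerivAt_heat hf.continuous hc ht x) (hasFDerivAt_prodMk_right t x)
  have h2 : fderiv ℝ (heat t f) x = _ := h1.fderiv
  unfold heat
  rw [← integral_pd_sub_mul hf hc x i (contDiff_heatKer ht)]
  have : pd i (heat t f) x = fderiv ℝ (heat t f) x (EuclideanSpace.single i 1) := rfl
  unfold heat at this h2
  rw [this, h2]
  simp [fderiv_heat_apply hf.continuous hc ht, fderiv_heatKer_space ht, mul_comm]

/-- The heat equation. -/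
lemma hasDerivAt_heat {f : E3 → ℝ} (hf : IsTest f) {t : ℝ} (ht : 0 < t) (x : E3) :
    HasDerivAt (fun s => heat s f x) (∑ i, heat t (pd i (pd i f)) x) t := by
  have h1 := (HasFDerivAt.comp (f := fun s : ℝ => (s, x)) t
    (hasFDerivAt_heat hf.continuous hf.2 ht x) (hasFDerivAt_prodMk_left t x)).hasDerivAt
  refine HasDerivAt.congr_deriv (f := fun s => heat s f x) h1 ?_
  have e : ∀ i, heat t (pd i (pd i f)) x = ∫ y, f y * pd i (pd i (heatKer t)) (x - y) := by
    intro i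
    have hk : ContDiff ℝ 1 (pd i (heatKer t)) :=
      ((contDiff_heatKer (n := 2) ht).fderiv_right (by norm_num)).clm_apply contDiff_const
    unfold heat
    rw [← integral_pd_sub_mul ((hf.pd i).1.of_le (by simp)) (hf.pd i).2 x i
      (contDiff_heatKer ht), ← integral_pd_sub_mul (hf.1.of_le (by simp)) hf.2 x i hk]
    simp_rw [mul_comm]
  simp_rw [e]
  rw [← integral_finsetSum]
  · simp only [ContinuousLinearMap.comp_apply, ContinuousLinearMap.inl_apply,
      fderiv_heat_apply hf.continuous hf.2 ht,
      fderiv_heatKer_time ht _ (hasDerivAt_heatKer ht _), Finset.mul_sum]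
  · intro i _
    have hk : Continuous (pd i (pd i (heatKer t))) := continuous_pd
      (((contDiff_heatKer (n := 2) ht).fderiv_right (by norm_num)).clm_apply contDiff_const) i
    exact (hf.continuous.mul (hk.comp (by fun_prop))).integrable_of_hasCompactSupport
      hf.2.mul_right

/-- A second order Taylor lower bound on `[0, 1]`. -/
lemma add_deriv_add_le_of_deriv2_ge {φ φ' φ'' : ℝ → ℝ} {m : ℝ}
    (h1 : ∀ τ ∈ Icc (0 : ℝ) 1, HasDerivAt φ (φ' τ) τ)
    (h2 : ∀ τ ∈ Icc (0 : ℝ) 1, HasDerivAt φ' (φ'' τ) τ)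
    (h3 : ∀ τ ∈ Icc (0 : ℝ) 1, 2 * m ≤ φ'' τ) : φ 0 + φ' 0 + m ≤ φ 1 := by
  have m1 : MonotoneOn (fun τ => φ' τ - 2 * m * τ) (Icc 0 1) := by
    have hd : ∀ τ ∈ Icc (0 : ℝ) 1, HasDerivAt (fun τ => φ' τ - 2 * m * τ) (φ'' τ - 2 * m * 1) τ :=
      fun τ hτ => (h2 τ hτ).sub ((hasDerivAt_id τ).const_mul (2 * m))
    refine monotoneOn_of_hasDerivWithinAt_nonneg (f' := fun τ => φ'' τ - 2 * m * 1)
      (convex_Icc 0 1) (fun τ hτ => (hd τ hτ).continuousAt.continuousWithinAt)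
      (fun τ hτ => (hd τ (interior_subset hτ)).hasDerivWithinAt) fun τ hτ => ?_
    linarith [h3 τ (interior_subset hτ)]
  have m2 : MonotoneOn (fun τ => φ τ - φ' 0 * τ - m * τ ^ 2) (Icc 0 1) := by
    have hd : ∀ τ ∈ Icc (0 : ℝ) 1, HasDerivAt (fun τ => φ τ - φ' 0 * τ - m * τ ^ 2)
        (φ' τ - φ' 0 * 1 - m * (2 * τ)) τ := fun τ hτ =>
      ((h1 τ hτ).sub ((hasDerivAt_id τ).const_mul (φ' 0))).sub
        (by simpa using (hasDerivAt_pow 2 τ).const_mul m)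
    refine monotoneOn_of_hasDerivWithinAt_nonneg (f' := fun τ => φ' τ - φ' 0 * 1 - m * (2 * τ))
      (convex_Icc 0 1) (fun τ hτ => (hd τ hτ).continuousAt.continuousWithinAt)
      (fun τ hτ => (hd τ (interior_subset hτ)).hasDerivWithinAt) fun τ hτ => ?_
    have hτ' := interior_subset hτ
    have := m1 (left_mem_Icc.2 zero_le_one) hτ' hτ'.1
    simp only [mul_zero, sub_zero] at this
    linarith
  have := m2 (left_mem_Icc.2 zero_le_one) (right_mem_Icc.2 zero_le_one) zero_le_one
  simp only [mul_zero, mul_one, sub_zero, ne_eq, OfNat.ofNat_ne_zero, not_false_eq_true, zero_pow,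
    one_pow] at this
  linarith

/-- The Bellman function of the bilinear embedding. -/
def bellman (p q K x y : ℝ) : ℝ :=
  K * x ^ p + K * y ^ q - y ^ q * (1 + (x * y ^ (1 - q)) ^ 2)⁻¹

lemma measurable_bellman (p q K : ℝ) : Measurable (fun v : ℝ × ℝ => bellman p q K v.1 v.2) := by
  unfold bellman; fun_prop

lemma bellman_nonneg {p q K x y : ℝ} (hK : 1 ≤ K) (hx : 0 < x) (hy : 0 < y) :
    0 ≤ bellman p q K x y := by
  unfold bellman
  have h1 : y ^ q * (1 + (x * y ^ (1 - q)) ^ 2)⁻¹ ≤ y ^ q :=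
    mul_le_of_le_one_right (by positivity)
      (inv_le_one_of_one_le₀ (by nlinarith [sq_nonneg (x * y ^ (1 - q))]))
  have h2 : 0 < x ^ p := by positivity
  have h3 : 0 < y ^ q := by positivity
  nlinarith

lemma bellman_le {p q K x y : ℝ} (hy : 0 < y) :
    bellman p q K x y ≤ K * (x ^ p + y ^ q) := by
  unfold bellman
  have : 0 ≤ y ^ q * (1 + (x * y ^ (1 - q)) ^ 2)⁻¹ := by positivity
  linarith

lemma two_mul_abs_le_quadratic {A X D σ β : ℝ} (hA : 1 ≤ A) (hX : |X| ≤ 14) (hD : 64 ≤ D) :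
    2 * |σ| * |β| ≤ A * σ ^ 2 - X * (σ * β) + D * β ^ 2 := by
  have hx : X * (σ * β) ≤ 14 * (|σ| * |β|) := by
    calc _ ≤ |X * (σ * β)| := le_abs_self _
      _ = |X| * (|σ| * |β|) := by rw [abs_mul, abs_mul]
      _ ≤ _ := mul_le_mul_of_nonneg_right hX (by positivity)
  have h1 : |σ| ^ 2 ≤ A * σ ^ 2 := by
    rw [sq_abs]; exact le_mul_of_one_le_left (sq_nonneg σ) hA
  have h2 : 64 * |β| ^ 2 ≤ D * β ^ 2 := by
    rw [sq_abs]; exact mul_le_mul_of_nonneg_right hD (sq_nonneg _)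
  linarith [sq_nonneg (|σ| - 8 * |β|),
    (by ring : (|σ| - 8 * |β|) ^ 2 = |σ| ^ 2 - 16 * (|σ| * |β|) + 64 * |β| ^ 2)]

/-- The Hessian of the perturbation term, in the scale invariant variables. -/
lemma bellman_quadratic_bound {s c A D σ β : ℝ} (hs : 0 < s) (hc0 : 0 ≤ c) (hc1 : c ≤ 1)
    (hA0 : 0 ≤ A) (hA : 1 / 4 ≤ s → 3 ≤ A) (hD : 76 ≤ D) :
    2 * |σ| * |β| ≤ A * σ ^ 2 + D * β ^ 2 -
      ((c + 1) * c * β ^ 2 * (1 + s ^ 2)⁻¹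
        + 2 * (c + 1) * β * (-2 * s * ((1 + s ^ 2)⁻¹) ^ 2) * (σ - c * s * β)
        + (6 * s ^ 2 - 2) * ((1 + s ^ 2)⁻¹) ^ 3 * (σ - c * s * β) ^ 2
        + (-2 * s * ((1 + s ^ 2)⁻¹) ^ 2) *
          (-c * σ * β - c * (σ - c * s * β) * β + c * s * β ^ 2)) := by
  set ρ := (1 + s ^ 2)⁻¹ with hρ
  have hρ0 : 0 < ρ := by positivity
  have hρs : ρ * (1 + s ^ 2) = 1 := inv_mul_cancel₀ (by positivity)
  have hρ1 : ρ ≤ 1 := by nlinarith [mul_pos hρ0 (pow_pos hs 2)]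
  -- basic bounded quantities: `ρ = κ²`-type weights
  have a1 : s ^ 2 * ρ ≤ 1 := by nlinarith
  have a1' : 0 ≤ s ^ 2 * ρ := by positivity
  have a2 : s * ρ ≤ 1 / 2 := by nlinarith [sq_nonneg (s - 1)]
  have a2' : 0 ≤ s * ρ := by positivity
  set P := s * ρ
  set N := s ^ 2 * ρ
  have hN : N = 1 - ρ := by linarith [hρs, (by ring : ρ * (1 + s ^ 2) = ρ + s ^ 2 * ρ)]
  -- coefficients
  have cA : 1 ≤ A - (6 * s ^ 2 - 2) * ρ ^ 3 := by
    have e : (6 * s ^ 2 - 2) * ρ ^ 3 = 6 * N * ρ ^ 2 - 2 * ρ ^ 3 := by simp only [N]; ring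
    rw [e, hN]
    rcases le_total (1 / 4) s with h | h
    · have := hA h
      nlinarith [mul_nonneg hρ0.le (sub_nonneg.2 hρ1), pow_pos hρ0 3,
        mul_nonneg (pow_pos hρ0 2).le (sub_nonneg.2 hρ1), sq_nonneg (ρ - 1/2)]
    · have hr : 16 / 17 ≤ ρ := by
        have : s ^ 2 ≤ 1 / 16 := by nlinarith
        nlinarith
      nlinarith [mul_nonneg (sub_nonneg.2 hr) (sub_nonneg.2 hρ1), pow_pos hρ0 3,
        mul_nonneg (pow_pos hρ0 2).le (sub_nonneg.2 hr),
        mul_nonneg (pow_pos hρ0 2).le (sub_nonneg.2 hρ1)]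
  set U := -2 * P * ρ with hU
  have bU : |U| ≤ 1 := by
    rw [abs_le]; constructor <;> nlinarith [mul_nonneg a2' hρ0.le]
  set V := 6 * N * P * ρ - 2 * P * ρ ^ 2 with hV
  have bV : |V| ≤ 6 := by
    have : P * ρ ≤ 1 / 2 := by nlinarith
    have h1 : 0 ≤ P * ρ := by positivity
    have h2 : N * (P * ρ) ≤ 1 / 2 := by nlinarith
    have h3 : 0 ≤ N * (P * ρ) := by positivity
    have h4 : P * ρ * ρ ≤ 1 / 2 := by nlinarith
    have h5 : 0 ≤ P * ρ * ρ := by positivity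
    rw [abs_le]; constructor <;> nlinarith
  have bX : |2 * U - 2 * c * V| ≤ 14 := by
    have : |c * V| ≤ 6 := by
      rw [abs_mul, abs_of_nonneg hc0]; nlinarith [abs_nonneg V]
    rw [abs_le] at *
    constructor <;> linarith
  have bY : (c + 1) * c * ρ + 2 * (c + 1) * c * (2 * N * ρ) +
      c ^ 2 * (6 * N ^ 2 * ρ - 2 * N * ρ ^ 2)
      - 2 * N * ρ * (c ^ 2 + c) ≤ 12 := by
    have n1 : N * ρ ≤ 1 := by nlinarith
    have n0 : 0 ≤ N * ρ := by positivity
    have n2 : N * (N * ρ) ≤ 1 := by nlinarith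
    have n3 : 0 ≤ N * (N * ρ) := by positivity
    have c2 : c ^ 2 ≤ 1 := by nlinarith
    have c20 : 0 ≤ c ^ 2 := by positivity
    have t1 : (c + 1) * c * ρ ≤ 2 := by nlinarith [mul_nonneg hc0 hρ0.le]
    have t2 : c ^ 2 * (N * (N * ρ)) ≤ 1 := by nlinarith
    have t3 : 0 ≤ c ^ 2 * (N * ρ ^ 2) := by positivity
    have t4 : (c ^ 2 + c) * (N * ρ) ≤ 2 := by nlinarith
    nlinarith
  have expand : A * σ ^ 2 + D * β ^ 2 -
      ((c + 1) * c * β ^ 2 * ρ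
        + 2 * (c + 1) * β * (-2 * s * ρ ^ 2) * (σ - c * s * β)
        + (6 * s ^ 2 - 2) * ρ ^ 3 * (σ - c * s * β) ^ 2
        + (-2 * s * ρ ^ 2) *
          (-c * σ * β - c * (σ - c * s * β) * β + c * s * β ^ 2)) =
      (A - (6 * s ^ 2 - 2) * ρ ^ 3) * σ ^ 2 - (2 * U - 2 * c * V) * (σ * β)
      + (D - ((c + 1) * c * ρ + 2 * (c + 1) * c * (2 * N * ρ) +
        c ^ 2 * (6 * N ^ 2 * ρ - 2 * N * ρ ^ 2) - 2 * N * ρ * (c ^ 2 + c))) * β ^ 2 := by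
    simp only [hU, hV, P, N]; ring
  rw [expand]
  exact two_mul_abs_le_quadratic cA bX (by linarith)

lemma hasDerivAt_line (x a τ : ℝ) : HasDerivAt (fun τ => x + τ * a) a τ := by
  simpa using ((hasDerivAt_id τ).mul_const a).const_add x

lemma hasDerivAt_line_rpow {y b τ : ℝ} (r : ℝ) (h : 0 < y + τ * b) :
    HasDerivAt (fun τ => (y + τ * b) ^ r) (b * r * (y + τ * b) ^ (r - 1)) τ :=
  (hasDerivAt_line y b τ).rpow_const (Or.inl h.ne')

set_option maxHeartbeats 1600000 in
/-- The quantitative convexity of the Bellman function. -/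
lemma exists_bellman_gain {p q : ℝ} (hp : 2 ≤ p) (hpq : p.HolderConjugate q) :
    ∃ K, 1 ≤ K ∧ ∀ x y, 0 < x → 0 < y → ∃ α γ, ∀ x' y', 0 < x' → 0 < y' →
      bellman p q K x y + α * (x' - x) + γ * (y' - y) + |x' - x| * |y' - y| ≤
        bellman p q K x' y' := by
  have hq1 : 1 < q := hpq.symm.lt
  have hpq' : p + q = p * q := hpq.mul_eq_add.symm
  have hq2 : q ≤ 2 := by nlinarith
  set K : ℝ := 2 * 4 ^ (p - 2) + 76 / (q * (q - 1)) + 1 with hK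
  have hqq : 0 < q * (q - 1) := by nlinarith
  have h4 : (0 : ℝ) < 4 ^ (p - 2) := by positivity
  have h76 : 0 < 76 / (q * (q - 1)) := by positivity
  refine ⟨K, by linarith, fun x y hx hy => ?_⟩
  refine ⟨K * (p * x ^ (p - 1)) + y ^ q * (2 * (x * y ^ (1 - q)) * y ^ (1 - q)) *
      ((1 + (x * y ^ (1 - q)) ^ 2)⁻¹) ^ 2,
    K * (q * y ^ (q - 1)) - (q * y ^ (q - 1) * (1 + (x * y ^ (1 - q)) ^ 2)⁻¹ -
      y ^ q * (2 * (x * y ^ (1 - q)) * (x * ((1 - q) * y ^ (1 - q - 1)))) *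
      ((1 + (x * y ^ (1 - q)) ^ 2)⁻¹) ^ 2), fun x' y' hx' hy' => ?_⟩
  set a := x' - x with ha
  set b := y' - y with hb
  have hX : ∀ τ ∈ Icc (0 : ℝ) 1, 0 < x + τ * a := by
    rintro τ ⟨h0, h1⟩
    rcases h0.eq_or_lt with rfl | h0
    · simpa
    · nlinarith [mul_pos h0 hx', mul_nonneg (sub_nonneg.2 h1) hx.le]
  have hY : ∀ τ ∈ Icc (0 : ℝ) 1, 0 < y + τ * b := by
    rintro τ ⟨h0, h1⟩
    rcases h0.eq_or_lt with rfl | h0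
    · simpa
    · nlinarith [mul_pos h0 hy', mul_nonneg (sub_nonneg.2 h1) hy.le]
  let S : ℝ → ℝ := fun τ => (x + τ * a) * (y + τ * b) ^ (1 - q)
  let S' : ℝ → ℝ := fun τ => a * (y + τ * b) ^ (1 - q) +
    (x + τ * a) * (b * (1 - q) * (y + τ * b) ^ (1 - q - 1))
  let S'' : ℝ → ℝ := fun τ => a * (b * (1 - q) * (y + τ * b) ^ (1 - q - 1)) +
    (a * (b * (1 - q) * (y + τ * b) ^ (1 - q - 1)) +
      (x + τ * a) * (b * (1 - q) * (b * (1 - q - 1) * (y + τ * b) ^ (1 - q - 1 - 1))))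
  have hS : ∀ τ ∈ Icc (0 : ℝ) 1, HasDerivAt S (S' τ) τ := fun τ hτ =>
    (hasDerivAt_line x a τ).mul (hasDerivAt_line_rpow (1 - q) (hY τ hτ))
  have hS' : ∀ τ ∈ Icc (0 : ℝ) 1, HasDerivAt S' (S'' τ) τ := fun τ hτ =>
    ((hasDerivAt_line_rpow (1 - q) (hY τ hτ)).const_mul a |>.congr_deriv (by ring)).add
      ((hasDerivAt_line x a τ).mul ((hasDerivAt_line_rpow (1 - q - 1) (hY τ hτ)).const_mul _))
  let ρ : ℝ → ℝ := fun τ => (1 + S τ ^ 2)⁻¹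
  have hρ : ∀ τ ∈ Icc (0 : ℝ) 1, HasDerivAt ρ (-(2 * S τ * S' τ) * ρ τ ^ 2) τ := by
    intro τ hτ
    have h0 : 1 + S τ ^ 2 ≠ 0 := by positivity
    refine ((((hS τ hτ).pow 2).const_add 1).inv h0).congr_deriv ?_
    simp only [ρ, Pi.pow_apply]
    field_simp
    norm_num
    ring
  let φ : ℝ → ℝ := fun τ => K * (x + τ * a) ^ p + K * (y + τ * b) ^ q - (y + τ * b) ^ q * ρ τ
  let φ' : ℝ → ℝ := fun τ => K * (a * p * (x + τ * a) ^ (p - 1)) +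
    K * (b * q * (y + τ * b) ^ (q - 1)) -
    (b * q * (y + τ * b) ^ (q - 1) * ρ τ +
      (y + τ * b) ^ q * (-(2 * S τ * S' τ) * ρ τ ^ 2))
  let φ'' : ℝ → ℝ := fun τ => K * (a * p * (a * (p - 1) * (x + τ * a) ^ (p - 1 - 1))) +
    K * (b * q * (b * (q - 1) * (y + τ * b) ^ (q - 1 - 1))) -
    (b * q * (b * (q - 1) * (y + τ * b) ^ (q - 1 - 1)) * ρ τ +
      b * q * (y + τ * b) ^ (q - 1) * (-(2 * S τ * S' τ) * ρ τ ^ 2) +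
      (b * q * (y + τ * b) ^ (q - 1) * (-(2 * S τ * S' τ) * ρ τ ^ 2) +
        (y + τ * b) ^ q * (-(2 * S' τ * S' τ + 2 * S τ * S'' τ) * ρ τ ^ 2 +
          -(2 * S τ * S' τ) * (2 * ρ τ * (-(2 * S τ * S' τ) * ρ τ ^ 2)))))
  have h1 : ∀ τ ∈ Icc (0 : ℝ) 1, HasDerivAt φ (φ' τ) τ := fun τ hτ =>
    (((hasDerivAt_line_rpow p (hX τ hτ)).const_mul K).add
      ((hasDerivAt_line_rpow q (hY τ hτ)).const_mul K)).sub
      ((hasDerivAt_line_rpow q (hY τ hτ)).mul (hρ τ hτ))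
  have h2 : ∀ τ ∈ Icc (0 : ℝ) 1, HasDerivAt φ' (φ'' τ) τ := fun τ hτ => by
    have hSS : HasDerivAt (fun τ => -(2 * S τ * S' τ))
        (-(2 * S' τ * S' τ + 2 * S τ * S'' τ)) τ :=
      (((hS τ hτ).const_mul 2).mul (hS' τ hτ)).neg
    have hρ2 : HasDerivAt (fun τ => ρ τ ^ 2) (2 * ρ τ * (-(2 * S τ * S' τ) * ρ τ ^ 2)) τ := by
      simpa using (hρ τ hτ).fun_pow 2
    exact (((hasDerivAt_line_rpow (p - 1) (hX τ hτ)).const_mul (a * p) |>.const_mul K).add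
      ((hasDerivAt_line_rpow (q - 1) (hY τ hτ)).const_mul (b * q) |>.const_mul K)).sub
      ((((hasDerivAt_line_rpow (q - 1) (hY τ hτ)).const_mul (b * q)).mul (hρ τ hτ)).add
        ((hasDerivAt_line_rpow q (hY τ hτ)).mul (hSS.mul hρ2)))
  have h3 : ∀ τ ∈ Icc (0 : ℝ) 1, 2 * (|a| * |b|) ≤ φ'' τ := by
    intro τ hτ
    have hXp := hX τ hτ
    have hYp := hY τ hτ
    simp only [φ'', ρ, S'', S', S]
    set X := x + τ * a
    set Y := y + τ * b
    set e := Y ^ (1 - q) with he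
    have he0 : 0 < e := by positivity
    have e1 : Y ^ (q - 1) = 1 / e := by
      rw [he, one_div, ← Real.rpow_neg hYp.le]; ring_nf
    have e2 : Y ^ q = Y / e := by
      rw [eq_div_iff he0.ne', he, ← Real.rpow_add hYp]; ring_nf; simp
    have e3 : Y ^ (q - 1 - 1) = 1 / (e * Y) := by
      rw [Real.rpow_sub_one hYp.ne', e1, div_div]
    have e4 : Y ^ (1 - q - 1) = e / Y := by rw [Real.rpow_sub_one hYp.ne']
    have e5 : Y ^ (1 - q - 1 - 1) = e / Y ^ 2 := by
      rw [Real.rpow_sub_one hYp.ne', e4, div_div, sq]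
    have e6 : e ^ (-(p - 2)) = Y * e := by
      rw [he, ← Real.rpow_mul hYp.le, mul_comm Y, ← Real.rpow_add_one hYp.ne']
      congr 1; linarith
    rw [e1, e2, e3, e4, e5]
    have hbound := bellman_quadratic_bound (s := X * e) (c := q - 1)
      (A := K * p * (p - 1) * X ^ (p - 1 - 1) / (Y * e)) (D := K * (q * (q - 1)))
      (σ := a * e) (β := b / Y) (by positivity) (by linarith) (by linarith) ?_ ?_ ?_
    · have hm := mul_le_mul_of_nonneg_left hbound (by positivity : 0 ≤ Y / e)
      calc 2 * (|a| * |b|) = Y / e * (2 * |a * e| * |b / Y|) := by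
            rw [abs_mul, abs_div, abs_of_pos he0, abs_of_pos hYp]; field_simp
        _ ≤ _ := hm
        _ = _ := by
          have hr : (1 + (X * e) ^ 2)⁻¹ * (1 + (X * e) ^ 2) = 1 := inv_mul_cancel₀ (by positivity)
          generalize (1 + (X * e) ^ 2)⁻¹ = r at hr ⊢
          have hr3 : (6 * (X * e) ^ 2 - 2) * r ^ 3 = 8 * (X * e) ^ 2 * r ^ 3 - 2 * r ^ 2 := by
            linear_combination (-2 * r ^ 2) * hr
          rw [hr3]
          field_simp
          ring
    · have : 0 < p - 1 := by linarith
      have : 0 < K := by linarith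
      positivity
    · intro hs
      rw [le_div_iff₀ (by positivity), ← e6]
      have hX4 : (4 * e)⁻¹ ≤ X := by
        rw [inv_le_iff_one_le_mul₀ (by positivity)]; linarith
      have hmono : ((4 * e)⁻¹) ^ (p - 2) ≤ X ^ (p - 2) :=
        Real.rpow_le_rpow (by positivity) hX4 (by linarith)
      have hinv : ((4 * e)⁻¹) ^ (p - 2) = (4 ^ (p - 2))⁻¹ * e ^ (-(p - 2)) := by
        rw [Real.inv_rpow (by positivity), Real.mul_rpow (by norm_num) he0.le, mul_inv,
          Real.rpow_neg he0.le]
      have hpp : 2 ≤ p * (p - 1) := by nlinarith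
      have hKp : 3 * 4 ^ (p - 2) ≤ K * (p * (p - 1)) := by nlinarith
      have hexp : p - 1 - 1 = p - 2 := by ring
      rw [hexp]
      have hKp0 : 0 ≤ K * (p * (p - 1)) := by nlinarith
      calc 3 * e ^ (-(p - 2)) = 3 * 4 ^ (p - 2) * ((4 ^ (p - 2))⁻¹ * e ^ (-(p - 2))) := by
            field_simp
        _ ≤ K * (p * (p - 1)) * X ^ (p - 2) := by
            rw [← hinv]
            exact mul_le_mul hKp hmono (by positivity) hKp0
        _ = _ := by ring
    · have : 76 / (q * (q - 1)) ≤ K := by linarith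
      rwa [div_le_iff₀ hqq] at this
  have := add_deriv_add_le_of_deriv2_ge h1 h2 h3
  simp only [φ, φ', ρ, S, S', zero_mul, add_zero, one_mul] at this
  have ex : x + a = x' := by rw [ha]; ring
  have ey : y + b = y' := by rw [hb]; ring
  rw [ex, ey] at this
  unfold bellman
  refine le_trans (le_of_eq ?_) this
  ring

lemma heat_pos {t : ℝ} (ht : 0 < t) {f : E3 → ℝ} (hf : Continuous f) {M : ℝ}
    (hM : ∀ y, |f y| ≤ M) (h0 : ∀ y, 0 ≤ f y) {y₀ : E3} (hy₀ : f y₀ ≠ 0) (x : E3) :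
    0 < heat t f x :=
  integral_pos_of_integrable_nonneg_nonzero (x := y₀)
    (((continuous_heatKer t).comp (by fun_prop)).mul hf)
    (integrable_heatKer_mul ht x hf.aestronglyMeasurable hM)
    (fun y => mul_nonneg (heatKer_pos ht _).le (h0 y))
    (mul_ne_zero (heatKer_pos ht _).ne' hy₀)

lemma continuous_heat {t : ℝ} (ht : 0 < t) {f : E3 → ℝ} (hf : Continuous f)
    (hc : HasCompactSupport f) : Continuous (heat t f) :=
  continuous_iff_continuousAt.2 fun x => (differentiableAt_heat hf hc ht x).continuousAt

lemma measurable_uncurry_heat {f : E3 → ℝ} (hf : Continuous f) :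
    Measurable (fun v : ℝ × E3 => heat v.1 f v.2) := by
  unfold heat
  refine (StronglyMeasurable.integral_prod_right
    (f := fun (v : ℝ × E3) y => heatKer v.1 (v.2 - y) * f y) ?_).measurable
  refine Measurable.stronglyMeasurable ?_
  refine Measurable.mul ?_ (hf.measurable.comp measurable_snd)
  exact measurable_uncurry_heatKer.comp
    (show Measurable fun w : (ℝ × E3) × E3 => (w.1.1, w.1.2 - w.2) by fun_prop)

lemma lintegral_lintegral_heatKer {h : ℝ} (hh : 0 < h) {F : E3 → ℝ} (hF : Measurable F) :
    ∫⁻ x, ∫⁻ y, ENNReal.ofReal (heatKer h (x - y) * F y) = ∫⁻ y, ENNReal.ofReal (F y) := by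
  rw [lintegral_lintegral_swap]
  · refine lintegral_congr fun y => ?_
    simp_rw [ENNReal.ofReal_mul (heatKer_pos hh _).le, heatKer_sub_comm h _ y]
    rw [lintegral_mul_const, lintegral_heatKer_sub hh, one_mul]
    exact ((continuous_heatKer h).comp (by fun_prop)).measurable.ennreal_ofReal
  · refine Measurable.aemeasurable (Measurable.ennreal_ofReal ?_)
    exact ((continuous_heatKer h).measurable.comp (by fun_prop)).mul (hF.comp measurable_snd)

/-- Jensen's inequality for the heat semigroup, integrated in space. -/
lemma lintegral_heat_rpow_le {t p : ℝ} (ht : 0 < t) (hp : 1 ≤ p) {f : E3 → ℝ}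
    (hf : Continuous f) (hc : HasCompactSupport f) (h0 : ∀ y, 0 ≤ f y)
    (hpos : ∀ x, 0 < heat t f x) :
    ∫⁻ x, ENNReal.ofReal (heat t f x ^ p) ≤ ∫⁻ x, ENNReal.ofReal (f x ^ p) := by
  obtain ⟨M, hM0, hM⟩ := exists_abs_le hf hc
  have hfp : Continuous fun y => f y ^ p := hf.rpow_const fun _ => Or.inr (by linarith)
  have hfpM : ∀ y, |f y ^ p| ≤ M ^ p := fun y => by
    rw [abs_of_nonneg (Real.rpow_nonneg (h0 y) p)]
    exact Real.rpow_le_rpow (h0 y) ((le_abs_self _).trans (hM y)) (by linarith)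
  rw [← lintegral_lintegral_heatKer ht hfp.measurable]
  refine lintegral_mono fun x => ?_
  have hi := integrable_heatKer_mul ht x hfp.aestronglyMeasurable hfpM
  rw [← ofReal_integral_eq_lintegral_ofReal hi (Filter.Eventually.of_forall fun y =>
    mul_nonneg (heatKer_pos ht _).le (Real.rpow_nonneg (h0 y) p))]
  refine ENNReal.ofReal_le_ofReal ?_
  set U := heat t f x with hU
  have hUp : 0 < U := hpos x
  have hif := integrable_heatKer_mul ht x hf.aestronglyMeasurable hM
  have tangent : ∀ y, U ^ p + p * U ^ (p - 1) * (f y - U) ≤ f y ^ p := by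
    intro y
    have hb := one_add_mul_self_le_rpow_one_add (s := f y / U - 1)
      (by linarith [div_nonneg (h0 y) hUp.le]) hp
    rw [add_sub_cancel, Real.div_rpow (h0 y) hUp.le, le_div_iff₀ (by positivity)] at hb
    refine le_trans (le_of_eq ?_) hb
    rw [Real.rpow_sub_one hUp.ne']
    field_simp
  calc U ^ p = ∫ y, heatKer t (x - y) * (U ^ p - p * U ^ (p - 1) * U) +
        p * U ^ (p - 1) * (heatKer t (x - y) * f y) := by
        rw [integral_add ((integrable_heatKer_sub ht x).mul_const _) (hif.const_mul _),
          integral_mul_const, integral_heatKer_sub ht, integral_const_mul]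
        change _ = _ + p * U ^ (p - 1) * U
        ring
    _ ≤ ∫ y, heatKer t (x - y) * f y ^ p := by
        refine integral_mono (((integrable_heatKer_sub ht x).mul_const _).add (hif.const_mul _)) hi
          fun y => ?_
        have := mul_le_mul_of_nonneg_left (tangent y) (heatKer_pos ht (x - y)).le
        simp only at this ⊢
        linarith

/-- One step of the Bellman argument, at a fixed point. -/
lemma lintegral_bellman_gain {p q K : ℝ} (hp : 0 ≤ p) (hq : 0 ≤ q) (hK : 1 ≤ K)
    (H : ∀ x y, 0 < x → 0 < y → ∃ α γ, ∀ x' y', 0 < x' → 0 < y' →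
      bellman p q K x y + α * (x' - x) + γ * (y' - y) + |x' - x| * |y' - y| ≤
        bellman p q K x' y') {h : ℝ} (hh : 0 < h) {u v : E3 → ℝ} (hu : Continuous u)
    (hv : Continuous v) (hu0 : ∀ x, 0 < u x) (hv0 : ∀ x, 0 < v x) {M : ℝ}
    (huM : ∀ x, |u x| ≤ M) (hvM : ∀ x, |v x| ≤ M) (x : E3) :
    (∫⁻ y, ENNReal.ofReal (heatKer h (x - y) * (|u y - heat h u x| * |v y - heat h v x|))) +
      ENNReal.ofReal (bellman p q K (heat h u x) (heat h v x)) ≤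
      ∫⁻ y, ENNReal.ofReal (heatKer h (x - y) * bellman p q K (u y) (v y)) := by
  set U := heat h u x with hU
  set V := heat h v x with hV
  have hUp : 0 < U := heat_pos hh hu huM (fun y => (hu0 y).le) (hu0 0).ne' x
  have hVp : 0 < V := heat_pos hh hv hvM (fun y => (hv0 y).le) (hv0 0).ne' x
  have hUM : |U| ≤ M := abs_heat_le hh huM x
  have hVM : |V| ≤ M := abs_heat_le hh hvM x
  obtain ⟨α, γ, hg⟩ := H U V hUp hVp
  have hB0 : ∀ y, 0 ≤ bellman p q K (u y) (v y) := fun y => bellman_nonneg hK (hu0 y) (hv0 y)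
  have hBm : Measurable fun y => bellman p q K (u y) (v y) :=
    (measurable_bellman p q K).comp (hu.measurable.prodMk hv.measurable)
  have iB : Integrable fun y => heatKer h (x - y) * bellman p q K (u y) (v y) := by
    refine integrable_heatKer_mul hh x hBm.aestronglyMeasurable (M := K * (M ^ p + M ^ q))
      fun y => ?_
    rw [abs_of_nonneg (hB0 y)]
    refine (bellman_le (hv0 y)).trans (mul_le_mul_of_nonneg_left (add_le_add ?_ ?_) (by linarith))
    · exact Real.rpow_le_rpow (hu0 y).le ((le_abs_self _).trans (huM y)) hp
    · exact Real.rpow_le_rpow (hv0 y).le ((le_abs_self _).trans (hvM y)) hq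
  have iG : Integrable fun y => heatKer h (x - y) * (|u y - U| * |v y - V|) := by
    refine integrable_heatKer_mul hh x (by fun_prop) (M := (M + M) * (M + M)) fun y => ?_
    rw [abs_mul, abs_abs, abs_abs]
    refine mul_le_mul ?_ ?_ (abs_nonneg _) (by linarith [(abs_nonneg U).trans hUM])
    · exact (abs_sub _ _).trans (add_le_add (huM y) hUM)
    · exact (abs_sub _ _).trans (add_le_add (hvM y) hVM)
  have iu := integrable_heatKer_mul hh x hu.aestronglyMeasurable huM
  have iv := integrable_heatKer_mul hh x hv.aestronglyMeasurable hvM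
  have ik := integrable_heatKer_sub hh x
  rw [← ofReal_integral_eq_lintegral_ofReal iB (Filter.Eventually.of_forall fun y =>
      mul_nonneg (heatKer_pos hh _).le (hB0 y)),
    ← ofReal_integral_eq_lintegral_ofReal iG (Filter.Eventually.of_forall fun y =>
      mul_nonneg (heatKer_pos hh _).le (by positivity)),
    ← ENNReal.ofReal_add (integral_nonneg fun y => mul_nonneg (heatKer_pos hh _).le
      (by positivity)) (bellman_nonneg hK hUp hVp)]
  refine ENNReal.ofReal_le_ofReal ?_
  calc (∫ y, heatKer h (x - y) * (|u y - U| * |v y - V|)) + bellman p q K U V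
      = ∫ y, (heatKer h (x - y) * (|u y - U| * |v y - V|) +
          heatKer h (x - y) * (bellman p q K U V - α * U - γ * V)) +
          (α * (heatKer h (x - y) * u y) + γ * (heatKer h (x - y) * v y)) := by
        rw [integral_add (iG.fun_add (ik.mul_const _)) ((iu.const_mul _).fun_add (iv.const_mul _)),
          integral_add iG (ik.mul_const _), integral_add (iu.const_mul _) (iv.const_mul _),
          integral_mul_const, integral_heatKer_sub hh, integral_const_mul, integral_const_mul]
        change _ = _ + (α * U + γ * V)
        ring
    _ ≤ ∫ y, heatKer h (x - y) * bellman p q K (u y) (v y) := by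
        refine integral_mono ((iG.add (ik.mul_const _)).add
          ((iu.const_mul _).add (iv.const_mul _))) iB fun y => ?_
        have := mul_le_mul_of_nonneg_left (hg _ _ (hu0 y) (hv0 y)) (heatKer_pos hh (x - y)).le
        simp only at this ⊢
        linarith

lemma lintegral_Ioc_le_of_add_shift_le {Φ G : ℝ → ℝ≥0∞} (hΦ : Measurable Φ) {h a b : ℝ}
    (hh : 0 < h) (ha : 0 < a) {M₀ : ℝ≥0∞} (hM₀ : M₀ ≠ ⊤) (hle : ∀ t, 0 < t → Φ t ≤ M₀)
    (hG : ∀ t, 0 < t → G t + Φ (h + t) ≤ Φ t) :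
    ∫⁻ t in Ioc a b, G t ≤ ENNReal.ofReal h * M₀ := by
  have hshift : ∫⁻ t in Ioc a b, Φ (h + t) = ∫⁻ t in Ioc (h + a) (h + b), Φ t := by
    rw [← (measurePreserving_add_left volume h).setLIntegral_comp_preimage measurableSet_Ioc hΦ]
    simp
  have hbound : ∀ c d, 0 < c → ∫⁻ t in Ioc c d, Φ t ≤ ENNReal.ofReal (d - c) * M₀ := by
    intro c d hc
    calc ∫⁻ t in Ioc c d, Φ t ≤ ∫⁻ _ in Ioc c d, M₀ :=
          setLIntegral_mono' measurableSet_Ioc fun t ht => hle t (hc.trans ht.1)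
      _ = ENNReal.ofReal (d - c) * M₀ := by
          rw [setLIntegral_const, Real.volume_Ioc, mul_comm]
  have hfin : ∫⁻ t in Ioc (h + a) (h + b), Φ t ≠ ⊤ :=
    ((hbound _ _ (by positivity)).trans_lt (by finiteness)).ne
  refine ENNReal.le_of_add_le_add_right hfin ?_
  calc (∫⁻ t in Ioc a b, G t) + ∫⁻ t in Ioc (h + a) (h + b), Φ t
      = ∫⁻ t in Ioc a b, (G t + Φ (h + t)) := by
        rw [lintegral_add_right (g := fun t => Φ (h + t)) _ (hΦ.comp (measurable_const_add h)),
          hshift]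
    _ ≤ ∫⁻ t in Ioc a b, Φ t :=
        setLIntegral_mono' measurableSet_Ioc fun t ht => hG t (ha.trans ht.1)
    _ ≤ ∫⁻ t in Ioc a (h + a) ∪ Ioc (h + a) (h + b), Φ t := by
        refine lintegral_mono_set fun t ht => ?_
        rcases le_or_gt t (h + a) with h' | h'
        · exact Or.inl ⟨ht.1, h'⟩
        · exact Or.inr ⟨h', by linarith [ht.2]⟩
    _ ≤ (∫⁻ t in Ioc a (h + a), Φ t) + ∫⁻ t in Ioc (h + a) (h + b), Φ t := lintegral_union_le _ _ _
    _ ≤ _ := by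
        gcongr
        simpa using hbound a (h + a) ha

lemma lintegral_heatKer_mul_eq {δ : ℝ} (hδ : 0 < δ) {F : E3 → ℝ} (hF : Measurable F) (x : E3) :
    ∫⁻ y, ENNReal.ofReal (heatKer (δ ^ 2) (x - y) * F y) =
      ∫⁻ ζ, ENNReal.ofReal (heatKer 1 ζ * F (x - δ • ζ)) := by
  let H : E3 → ℝ≥0∞ := fun z => ENNReal.ofReal (heatKer (δ ^ 2) z * F (x - z))
  have hH : Measurable H :=
    ((continuous_heatKer _).measurable.mul (hF.comp (by fun_prop))).ennreal_ofReal
  have h1 : ∫⁻ y, ENNReal.ofReal (heatKer (δ ^ 2) (x - y) * F y) = ∫⁻ z, H z := by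
    rw [← lintegral_sub_left_eq_self H x]
    simp [H]
  have h2 := lintegral_map (μ := (volume : Measure E3)) hH (measurable_const_smul δ)
  rw [Measure.map_addHaar_smul _ hδ.ne', lintegral_smul_measure] at h2
  simp only [finrank_euclideanSpace, Fintype.card_fin] at h2
  have hδ3 : 0 < δ ^ 3 := by positivity
  have h3 : ∀ ζ, H (δ • ζ) = ENNReal.ofReal ((δ ^ 3)⁻¹) *
      ENNReal.ofReal (heatKer 1 ζ * F (x - δ • ζ)) := by
    intro ζ
    have hk := heatKer_sqrt_smul (h := δ ^ 2) (by positivity) ζ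
    rw [Real.sqrt_sq hδ.le] at hk
    have hr : (δ ^ 2 : ℝ) ^ (-(3 / 2) : ℝ) = (δ ^ 3)⁻¹ := by
      rw [← Real.rpow_natCast, ← Real.rpow_mul hδ.le, ← Real.rpow_natCast, ← Real.rpow_neg hδ.le]
      norm_num
    simp only [H]
    rw [hk, hr, mul_assoc, ENNReal.ofReal_mul (by positivity)]
  simp_rw [h3] at h2
  rw [lintegral_const_mul' _ _ ENNReal.ofReal_ne_top, abs_of_pos (by positivity)] at h2
  rw [h1]
  exact (ENNReal.mul_right_inj (by simpa using hδ3) ENNReal.ofReal_ne_top).1 h2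

lemma lintegral_rpow_ne_top {f : E3 → ℝ} (hf : Continuous f) (hc : HasCompactSupport f) {p : ℝ}
    (hp : 0 < p) : ∫⁻ x, ENNReal.ofReal (|f x| ^ p) ≠ ⊤ := by
  have h : Integrable fun x => |f x| ^ p := by
    refine (hf.abs.rpow_const fun _ => Or.inr hp.le).integrable_of_hasCompactSupport ?_
    exact hc.comp_left (g := fun s : ℝ => |s| ^ p) (by simp [hp.ne'])
  rw [← ofReal_integral_eq_lintegral_ofReal h (Filter.Eventually.of_forall fun x => by positivity)]
  exact ENNReal.ofReal_ne_top

/-- The Bellman function controls the discrete energy on a time interval. -/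
lemma lintegral_gain_le {p q K : ℝ} (hp : 1 ≤ p) (hq : 1 ≤ q) (hK : 1 ≤ K)
    (H : ∀ x y, 0 < x → 0 < y → ∃ α γ, ∀ x' y', 0 < x' → 0 < y' →
      bellman p q K x y + α * (x' - x) + γ * (y' - y) + |x' - x| * |y' - y| ≤
        bellman p q K x' y') {f g : E3 → ℝ}
    (hf : Continuous f) (hfc : HasCompactSupport f) (hf0 : ∀ x, 0 ≤ f x) {y₀ : E3} (hy₀ : f y₀ ≠ 0)
    (hg : Continuous g) (hgc : HasCompactSupport g) (hg0 : ∀ x, 0 ≤ g x) {z₀ : E3} (hz₀ : g z₀ ≠ 0)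
    {δ a b : ℝ} (hδ : 0 < δ) (ha : 0 < a) :
    ∫⁻ t in Ioc a b, ∫⁻ x, ∫⁻ ζ, ENNReal.ofReal (heatKer 1 ζ *
        (|heat t f (x - δ • ζ) - heat (δ ^ 2 + t) f x| *
          |heat t g (x - δ • ζ) - heat (δ ^ 2 + t) g x|)) ≤
      ENNReal.ofReal (δ ^ 2) * (ENNReal.ofReal K * ((∫⁻ x, ENNReal.ofReal (|f x| ^ p)) +
        ∫⁻ x, ENNReal.ofReal (|g x| ^ q))) := by
  obtain ⟨Mf, hMf0, hMf⟩ := exists_abs_le hf hfc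
  obtain ⟨Mg, hMg0, hMg⟩ := exists_abs_le hg hgc
  have uf : ∀ t, 0 < t → ∀ x, 0 < heat t f x := fun t ht => heat_pos ht hf hMf hf0 hy₀
  have ug : ∀ t, 0 < t → ∀ x, 0 < heat t g x := fun t ht => heat_pos ht hg hMg hg0 hz₀
  have cf : ∀ t, 0 < t → Continuous (heat t f) := fun t ht => continuous_heat ht hf hfc
  have cg : ∀ t, 0 < t → Continuous (heat t g) := fun t ht => continuous_heat ht hg hgc
  have mB : ∀ t, 0 < t → Measurable fun x => bellman p q K (heat t f x) (heat t g x) :=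
    fun t ht => (measurable_bellman p q K).comp
      ((cf t ht).measurable.prodMk (cg t ht).measurable)
  have hδ2 : 0 < δ ^ 2 := by positivity
  let B : ℝ × E3 → ℝ≥0∞ := fun w =>
    ENNReal.ofReal (bellman p q K (heat w.1 f w.2) (heat w.1 g w.2))
  have hB : Measurable B :=
    ((measurable_bellman p q K).comp
      ((measurable_uncurry_heat hf).prodMk (measurable_uncurry_heat hg))).ennreal_ofReal
  refine lintegral_Ioc_le_of_add_shift_le (Φ := fun t => ∫⁻ x, B (t, x)) hB.lintegral_prod_right'
    hδ2 ha ?_ ?_ ?_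
  · exact ENNReal.mul_ne_top ENNReal.ofReal_ne_top (ENNReal.add_ne_top.2
      ⟨lintegral_rpow_ne_top hf hfc (by linarith), lintegral_rpow_ne_top hg hgc (by linarith)⟩)
  · intro t ht
    have hm : Measurable fun x => ENNReal.ofReal (heat t f x ^ p) :=
      ((cf t ht).measurable.pow_const p).ennreal_ofReal
    calc ∫⁻ x, B (t, x) ≤ ∫⁻ x, ENNReal.ofReal K *
          (ENNReal.ofReal (heat t f x ^ p) + ENNReal.ofReal (heat t g x ^ q)) := by
          refine lintegral_mono fun x => ?_
          have h1 : 0 ≤ heat t f x ^ p := Real.rpow_nonneg (uf t ht x).le p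
          have h2 : 0 ≤ heat t g x ^ q := Real.rpow_nonneg (ug t ht x).le q
          rw [← ENNReal.ofReal_add h1 h2, ← ENNReal.ofReal_mul (by linarith)]
          exact ENNReal.ofReal_le_ofReal (bellman_le (ug t ht x))
      _ = ENNReal.ofReal K * ((∫⁻ x, ENNReal.ofReal (heat t f x ^ p)) +
          ∫⁻ x, ENNReal.ofReal (heat t g x ^ q)) := by
          rw [lintegral_const_mul' _ _ ENNReal.ofReal_ne_top, lintegral_add_left hm]
      _ ≤ _ := by
          simp_rw [abs_of_nonneg (hf0 _), abs_of_nonneg (hg0 _)]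
          refine mul_le_mul_right (add_le_add ?_ ?_) _
          · exact lintegral_heat_rpow_le ht hp hf hfc hf0 (uf t ht)
          · exact lintegral_heat_rpow_le ht hq hg hgc hg0 (ug t ht)
  · intro t ht
    have hf2 : heat (δ ^ 2) (heat t f) = heat (δ ^ 2 + t) f :=
      heat_heat hδ2 ht (hf.integrable_of_hasCompactSupport hfc)
    have hg2 : heat (δ ^ 2) (heat t g) = heat (δ ^ 2 + t) g :=
      heat_heat hδ2 ht (hg.integrable_of_hasCompactSupport hgc)
    have hstep := fun x => lintegral_bellman_gain (by linarith) (by linarith) hK H hδ2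
      (cf t ht) (cg t ht) (uf t ht) (ug t ht) (M := max Mf Mg)
      (fun x => (abs_heat_le ht hMf x).trans (le_max_left _ _))
      (fun x => (abs_heat_le ht hMg x).trans (le_max_right _ _)) x
    rw [hf2, hg2] at hstep
    have hs := lintegral_mono (μ := (volume : Measure E3)) hstep
    rw [lintegral_add_right _ (mB _ (by positivity : 0 < δ ^ 2 + t)).ennreal_ofReal,
      lintegral_lintegral_heatKer hδ2
        (F := fun y => bellman p q K (heat t f y) (heat t g y)) (mB t ht)] at hs
    refine le_trans (le_of_eq ?_) hs
    congr 1
    refine lintegral_congr fun x => ?_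
    rw [lintegral_heatKer_mul_eq hδ (F := fun y => |heat t f y - heat (δ ^ 2 + t) f x| *
      |heat t g y - heat (δ ^ 2 + t) g x|)]
    exact (((cf t ht).sub continuous_const).abs.mul ((cg t ht).sub continuous_const).abs).measurable

/-- The spatial gradient of the heat extension. -/
def heatGrad (f : E3 → ℝ) (t : ℝ) (x : E3) : E3 →L[ℝ] ℝ :=
  (fderiv ℝ (fun w : ℝ × E3 => heat w.1 f w.2) (t, x)).comp (ContinuousLinearMap.inr ℝ ℝ E3)

lemma measurable_heatGrad (f : E3 → ℝ) : Measurable fun w : ℝ × E3 => heatGrad f w.1 w.2 := by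
  have h : Continuous fun L : ℝ × E3 →L[ℝ] ℝ => L.comp (ContinuousLinearMap.inr ℝ ℝ E3) := by
    fun_prop
  exact h.measurable.comp (measurable_fderiv ℝ _)

lemma fderiv_heat {f : E3 → ℝ} (hf : Continuous f) (hc : HasCompactSupport f) {t : ℝ} (ht : 0 < t)
    (x : E3) : fderiv ℝ (heat t f) x = heatGrad f t x := by
  have h := hasFDerivAt_heat hf hc ht x
  rw [heatGrad, h.fderiv]
  exact (HasFDerivAt.comp (f := fun z : E3 => (t, z)) x h (hasFDerivAt_prodMk_right t x)).fderiv

lemma tendsto_heat_difference {f : E3 → ℝ} (hf : Continuous f) (hc : HasCompactSupport f) {t : ℝ}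
    (ht : 0 < t) (x ζ : E3) {δ : ℕ → ℝ} (hδ : ∀ n, 0 < δ n)
    (hlim : Filter.Tendsto δ Filter.atTop (nhds 0)) :
    Filter.Tendsto (fun n => (δ n)⁻¹ * (heat t f (x - δ n • ζ) - heat (δ n ^ 2 + t) f x))
      Filter.atTop (nhds (-heatGrad f t x ζ)) := by
  have h := (hasFDerivAt_heat hf hc ht x).differentiableAt.hasFDerivAt
  have c1 : HasDerivAt (fun s : ℝ => (t, x - s • ζ)) ((0 : ℝ), -ζ) 0 := by
    refine HasDerivAt.prodMk (hasDerivAt_const _ _) ?_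
    simpa using ((hasDerivAt_id (0 : ℝ)).smul_const ζ).const_sub x
  have c2 : HasDerivAt (fun s : ℝ => (s ^ 2 + t, x)) ((0 : ℝ), (0 : E3)) 0 := by
    refine HasDerivAt.prodMk ?_ (hasDerivAt_const _ _)
    simpa using ((hasDerivAt_id (0 : ℝ)).fun_pow 2).add_const t
  have d1 := HasFDerivAt.comp_hasDerivAt_of_eq (0 : ℝ) h c1 (by simp)
  have d2 := HasFDerivAt.comp_hasDerivAt_of_eq (0 : ℝ) h c2 (by simp)
  have d := hasDerivAt_iff_tendsto_slope_zero.1 (d1.sub d2)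
  have hδ' : Filter.Tendsto δ Filter.atTop (nhdsWithin 0 {0}ᶜ) :=
    tendsto_nhdsWithin_iff.2 ⟨hlim, Filter.Eventually.of_forall fun n => (hδ n).ne'⟩
  have hv : -heatGrad f t x ζ = (fderiv ℝ (fun w : ℝ × E3 => heat w.1 f w.2) (t, x)) (0, -ζ) -
      (fderiv ℝ (fun w : ℝ × E3 => heat w.1 f w.2) (t, x)) (0, 0) := by
    rw [heatGrad, ← map_sub, ContinuousLinearMap.comp_apply, ← map_neg]
    simp
  rw [hv]
  refine (d.comp hδ').congr fun n => ?_
  simp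

/-- A Gaussian average of a product of two linear functionals controls the product of
their norms. -/
lemma exists_le_lintegral_heatKer_mul :
    ∃ c : ℝ, 0 < c ∧ ∀ a b : E3 →L[ℝ] ℝ, ENNReal.ofReal (c * (‖a‖ * ‖b‖)) ≤
      ∫⁻ ζ, ENNReal.ofReal (heatKer 1 ζ * (|a ζ| * |b ζ|)) := by
  set κ : ℝ := (4 * Real.pi * 1) ^ (-(3 / 2) : ℝ) * Real.exp (-(5 / 2) ^ 2 / (4 * 1)) with hκ
  have hκ0 : 0 < κ := by positivity
  set ω : ℝ := (volume (Metric.ball (0 : E3) (1 / 2))).toReal with hω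
  have hωtop : volume (Metric.ball (0 : E3) (1 / 2)) ≠ ⊤ := measure_ball_lt_top.ne
  have hω0 : 0 < ω := ENNReal.toReal_pos (Metric.measure_ball_pos _ _ (by norm_num)).ne' hωtop
  refine ⟨κ * (1 / 4) * ω, by positivity, fun a b => ?_⟩
  rcases eq_or_ne a 0 with rfl | ha
  · simp
  rcases eq_or_ne b 0 with rfl | hb
  · simp
  have key : ∃ z : E3, ‖z‖ ≤ 2 ∧ ‖a‖ ≤ |a z| ∧ ‖b‖ ≤ |b z| := by
    set A := (InnerProductSpace.toDual ℝ E3).symm a with hA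
    set B := (InnerProductSpace.toDual ℝ E3).symm b with hB
    have hnA : ‖A‖ = ‖a‖ := LinearIsometryEquiv.norm_map _ _
    have hnB : ‖B‖ = ‖b‖ := LinearIsometryEquiv.norm_map _ _
    have eA : ∀ z, a z = inner ℝ A z := fun z => by simp [hA]
    have eB : ∀ z, b z = inner ℝ B z := fun z => by simp [hB]
    have hA0 : 0 < ‖A‖ := hnA ▸ norm_pos_iff.2 ha
    have hB0 : 0 < ‖B‖ := hnB ▸ norm_pos_iff.2 hb
    obtain ⟨s, hs, hs0⟩ : ∃ s : ℝ, |s| = 1 ∧ 0 ≤ s * inner ℝ A B := by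
      rcases le_total 0 (inner ℝ A B) with h | h
      · exact ⟨1, by simp, by simpa⟩
      · exact ⟨-1, by simp, by simpa⟩
    have hss : s * s = 1 := by rw [← abs_mul_abs_self, hs, one_mul]
    refine ⟨‖A‖⁻¹ • A + (s * ‖B‖⁻¹) • B, ?_, ?_, ?_⟩
    · refine (norm_add_le _ _).trans (le_of_eq ?_)
      rw [norm_smul, norm_smul, norm_mul, norm_inv, norm_inv, norm_norm, norm_norm,
        Real.norm_eq_abs, hs, one_mul, inv_mul_cancel₀ hA0.ne', inv_mul_cancel₀ hB0.ne']
      norm_num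
    · rw [eA, inner_add_right, inner_smul_right, inner_smul_right,
        real_inner_self_eq_norm_sq, ← hnA]
      refine le_trans ?_ (le_abs_self _)
      have : 0 ≤ s * ‖B‖⁻¹ * inner ℝ A B := by
        rw [mul_right_comm]; positivity
      have e : ‖A‖⁻¹ * ‖A‖ ^ 2 = ‖A‖ := by field_simp
      linarith
    · have : |b (‖A‖⁻¹ • A + (s * ‖B‖⁻¹) • B)| = |s * b (‖A‖⁻¹ • A + (s * ‖B‖⁻¹) • B)| := by
        rw [abs_mul, hs, one_mul]
      rw [this, eB, inner_add_right, inner_smul_right, inner_smul_right,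
        real_inner_self_eq_norm_sq, ← hnB]
      refine le_trans ?_ (le_abs_self _)
      have h1 : 0 ≤ ‖A‖⁻¹ * (s * inner ℝ A B) := by positivity
      have e : s * (‖A‖⁻¹ * inner ℝ B A + s * ‖B‖⁻¹ * ‖B‖ ^ 2) =
          ‖A‖⁻¹ * (s * inner ℝ A B) + (s * s) * (‖B‖⁻¹ * ‖B‖ ^ 2) := by
        rw [real_inner_comm]; ring
      have e2 : ‖B‖⁻¹ * ‖B‖ ^ 2 = ‖B‖ := by field_simp
      rw [e, hss, e2]
      linarith
  obtain ⟨z, hz, hza, hzb⟩ := key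
  have hlow : ∀ (L : E3 →L[ℝ] ℝ), ‖L‖ ≤ |L z| → ∀ ζ ∈ Metric.ball z (1 / 2), ‖L‖ / 2 ≤ |L ζ| := by
    intro L hL ζ hζ
    have h1 : |L (z - ζ)| ≤ ‖L‖ * (1 / 2) := by
      refine (L.le_opNorm _).trans (mul_le_mul_of_nonneg_left ?_ (norm_nonneg _))
      rw [← dist_eq_norm, dist_comm]; exact (Metric.mem_ball.1 hζ).le
    have h2 : |L z| ≤ |L (z - ζ)| + |L ζ| := by
      have := abs_add_le (L (z - ζ)) (L ζ)
      rwa [← map_add, sub_add_cancel] at this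
    linarith
  have hvol : volume (Metric.ball z (1 / 2)) = ENNReal.ofReal ω := by
    rw [hω, ENNReal.ofReal_toReal hωtop, Measure.addHaar_ball_center]
  calc ENNReal.ofReal (κ * (1 / 4) * ω * (‖a‖ * ‖b‖))
      = ∫⁻ _ in Metric.ball z (1 / 2), ENNReal.ofReal (κ * ((‖a‖ / 2) * (‖b‖ / 2))) := by
        rw [setLIntegral_const, hvol, ← ENNReal.ofReal_mul (by positivity)]
        congr 1; ring
    _ ≤ ∫⁻ ζ in Metric.ball z (1 / 2), ENNReal.ofReal (heatKer 1 ζ * (|a ζ| * |b ζ|)) := by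
        refine setLIntegral_mono' Metric.isOpen_ball.measurableSet fun ζ hζ => ?_
        refine ENNReal.ofReal_le_ofReal (mul_le_mul ?_ (mul_le_mul (hlow a hza ζ hζ)
          (hlow b hzb ζ hζ) (by positivity) (by positivity)) (by positivity)
          (heatKer_pos one_pos _).le)
        unfold heatKer
        rw [hκ]
        have : ‖ζ‖ ≤ 5 / 2 := by
          have := norm_le_norm_add_norm_sub' ζ z
          rw [← dist_eq_norm] at this
          linarith [Metric.mem_ball.1 hζ]
        have h2 : ‖ζ‖ ^ 2 ≤ (5 / 2) ^ 2 := by gcongr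
        gcongr
    _ ≤ _ := setLIntegral_le_lintegral _ _

/-- The energy of a pair of heat extensions over a time interval. -/
def energy (f g : E3 → ℝ) (a b : ℝ) : ℝ≥0∞ :=
  ∫⁻ t in Ioc a b, ∫⁻ x, ENNReal.ofReal (‖heatGrad f t x‖ * ‖heatGrad g t x‖)

lemma energy_comm (f g : E3 → ℝ) (a b : ℝ) : energy f g a b = energy g f a b := by
  unfold energy; simp_rw [mul_comm]

lemma energy_le_of_gain {p q K c : ℝ} (hp : 1 ≤ p) (hq : 1 ≤ q) (hK : 1 ≤ K)
    (H : ∀ x y, 0 < x → 0 < y → ∃ α γ, ∀ x' y', 0 < x' → 0 < y' →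
      bellman p q K x y + α * (x' - x) + γ * (y' - y) + |x' - x| * |y' - y| ≤
        bellman p q K x' y') (hc : 0 < c)
    (hcb : ∀ a b : E3 →L[ℝ] ℝ, ENNReal.ofReal (c * (‖a‖ * ‖b‖)) ≤
      ∫⁻ ζ, ENNReal.ofReal (heatKer 1 ζ * (|a ζ| * |b ζ|))) {f g : E3 → ℝ}
    (hf : Continuous f) (hfc : HasCompactSupport f) (hf0 : ∀ x, 0 ≤ f x) {y₀ : E3} (hy₀ : f y₀ ≠ 0)
    (hg : Continuous g) (hgc : HasCompactSupport g) (hg0 : ∀ x, 0 ≤ g x) {z₀ : E3} (hz₀ : g z₀ ≠ 0)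
    {a b : ℝ} (ha : 0 < a) :
    ENNReal.ofReal c * energy f g a b ≤
      ENNReal.ofReal K * ((∫⁻ x, ENNReal.ofReal (|f x| ^ p)) +
        ∫⁻ x, ENNReal.ofReal (|g x| ^ q)) := by
  set M₀ := ENNReal.ofReal K * ((∫⁻ x, ENNReal.ofReal (|f x| ^ p)) +
    ∫⁻ x, ENNReal.ofReal (|g x| ^ q))
  let δ : ℕ → ℝ := fun n => 1 / ((n : ℝ) + 1)
  have hδ : ∀ n, 0 < δ n := fun n => by positivity
  have hlim : Filter.Tendsto δ Filter.atTop (nhds 0) := tendsto_one_div_add_atTop_nhds_zero_nat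
  let D : (E3 → ℝ) → ℕ → ℝ × (E3 × E3) → ℝ := fun f n w =>
    (δ n)⁻¹ * (heat w.1 f (w.2.1 - δ n • w.2.2) - heat (δ n ^ 2 + w.1) f w.2.1)
  have hD : ∀ f, Continuous f → ∀ n, Measurable (D f n) := by
    intro f hf n
    have h1 : Measurable fun w : ℝ × (E3 × E3) => heat w.1 f (w.2.1 - δ n • w.2.2) :=
      (measurable_uncurry_heat hf).comp
        (show Measurable fun w : ℝ × (E3 × E3) => (w.1, w.2.1 - δ n • w.2.2) by fun_prop)
    have h2 : Measurable fun w : ℝ × (E3 × E3) => heat (δ n ^ 2 + w.1) f w.2.1 :=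
      (measurable_uncurry_heat hf).comp
        (show Measurable fun w : ℝ × (E3 × E3) => (δ n ^ 2 + w.1, w.2.1) by fun_prop)
    exact (h1.sub h2).const_mul _
  let F : ℕ → ℝ × (E3 × E3) → ℝ≥0∞ := fun n w =>
    ENNReal.ofReal (heatKer 1 w.2.2 * (|D f n w| * |D g n w|))
  have hF : ∀ n, Measurable (F n) := fun n => by
    refine Measurable.ennreal_ofReal (Measurable.mul ?_ ?_)
    · exact (continuous_heatKer 1).measurable.comp (by fun_prop)
    · exact (hD f hf n).abs.mul (hD g hg n).abs
  let μ : Measure (ℝ × (E3 × E3)) := (volume.restrict (Ioc a b)).prod (volume.prod volume)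
  have iter : ∀ G : ℝ × (E3 × E3) → ℝ≥0∞, Measurable G →
      ∫⁻ w, G w ∂μ = ∫⁻ t in Ioc a b, ∫⁻ x, ∫⁻ ζ, G (t, (x, ζ)) := by
    intro G hG
    rw [lintegral_prod _ hG.aemeasurable]
    refine lintegral_congr fun t => ?_
    exact lintegral_prod (fun y => G (t, y)) (hG.comp measurable_prodMk_left).aemeasurable
  have hFle : ∀ n, ∫⁻ w, F n w ∂μ ≤ M₀ := by
    intro n
    have hn := hδ n
    rw [iter _ (hF n)]
    have e : ∀ t x ζ, F n (t, (x, ζ)) = ENNReal.ofReal ((δ n ^ 2)⁻¹) *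
        ENNReal.ofReal (heatKer 1 ζ * (|heat t f (x - δ n • ζ) - heat (δ n ^ 2 + t) f x| *
          |heat t g (x - δ n • ζ) - heat (δ n ^ 2 + t) g x|)) := by
      intro t x ζ
      rw [← ENNReal.ofReal_mul (by positivity)]
      simp only [F, D, abs_mul, abs_of_pos (inv_pos.2 hn)]
      congr 1
      rw [sq, mul_inv]
      ring
    simp_rw [e, lintegral_const_mul' _ _ ENNReal.ofReal_ne_top]
    calc _ ≤ ENNReal.ofReal ((δ n ^ 2)⁻¹) * (ENNReal.ofReal (δ n ^ 2) * M₀) :=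
          mul_le_mul_right (lintegral_gain_le hp hq hK H hf hfc hf0 hy₀ hg hgc hg0 hz₀ hn ha) _
      _ = M₀ := by
          rw [← mul_assoc, ← ENNReal.ofReal_mul (by positivity),
            inv_mul_cancel₀ (by positivity), ENNReal.ofReal_one, one_mul]
  have hfatou : ∫⁻ w, Filter.liminf (fun n => F n w) Filter.atTop ∂μ ≤ M₀ := by
    refine (lintegral_liminf_le hF).trans ?_
    refine Filter.liminf_le_of_le (by isBoundedDefault) fun B hB => ?_
    obtain ⟨n, hn⟩ := hB.exists
    exact hn.trans (hFle n)
  have hpt : ∀ t, 0 < t → ∀ x ζ, Filter.liminf (fun n => F n (t, (x, ζ))) Filter.atTop =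
      ENNReal.ofReal (heatKer 1 ζ * (|heatGrad f t x ζ| * |heatGrad g t x ζ|)) := by
    intro t ht x ζ
    have h1 := (tendsto_heat_difference hf hfc ht x ζ hδ hlim).abs
    have h2 := (tendsto_heat_difference hg hgc ht x ζ hδ hlim).abs
    rw [abs_neg] at h1 h2
    exact (ENNReal.tendsto_ofReal ((h1.mul h2).const_mul (heatKer 1 ζ))).liminf_eq
  refine le_trans ?_ hfatou
  rw [iter _ (Measurable.liminf hF), energy, ← lintegral_const_mul' _ _ ENNReal.ofReal_ne_top]
  refine setLIntegral_mono' measurableSet_Ioc fun t ht => ?_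
  rw [← lintegral_const_mul' _ _ ENNReal.ofReal_ne_top]
  refine lintegral_mono fun x => ?_
  rw [← ENNReal.ofReal_mul hc.le]
  simp_rw [hpt t (ha.trans ht.1)]
  exact hcb _ _

lemma energy_zero_left (g : E3 → ℝ) {a b : ℝ} : energy (fun _ => 0) g a b = 0 := by
  have h : ∀ t x, heatGrad (fun _ => 0) t x = 0 := fun t x => by simp [heatGrad, heat]
  simp [energy, h]

/-- The bilinear embedding for nonnegative functions. -/
lemma exists_energy_le_of_two_le {p q : ℝ} (hp : 2 ≤ p) (hpq : p.HolderConjugate q) :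
    ∃ C : ℝ, 0 ≤ C ∧ ∀ f g : E3 → ℝ, Continuous f → HasCompactSupport f → (∀ x, 0 ≤ f x) →
      Continuous g → HasCompactSupport g → (∀ x, 0 ≤ g x) → ∀ a b : ℝ, 0 < a →
      energy f g a b ≤ ENNReal.ofReal C * ((∫⁻ x, ENNReal.ofReal (|f x| ^ p)) +
        ∫⁻ x, ENNReal.ofReal (|g x| ^ q)) := by
  obtain ⟨K, hK, H⟩ := exists_bellman_gain hp hpq
  obtain ⟨c, hc, hcb⟩ := exists_le_lintegral_heatKer_mul
  refine ⟨c⁻¹ * K, by positivity, fun f g hf hfc hf0 hg hgc hg0 a b ha => ?_⟩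
  by_cases h1 : ∃ y₀, f y₀ ≠ 0
  swap
  · have : f = fun _ => 0 := funext fun y => by_contra fun h => h1 ⟨y, h⟩
    rw [this, energy_zero_left]; exact zero_le
  by_cases h2 : ∃ z₀, g z₀ ≠ 0
  swap
  · have : g = fun _ => 0 := funext fun y => by_contra fun h => h2 ⟨y, h⟩
    rw [this, energy_comm, energy_zero_left]; exact zero_le
  obtain ⟨y₀, hy₀⟩ := h1
  obtain ⟨z₀, hz₀⟩ := h2
  have := mul_le_mul_right (energy_le_of_gain (by linarith) hpq.symm.lt.le hK H hc hcb hf hfc hf0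
    hy₀ hg hgc hg0 hz₀ (b := b) ha) (ENNReal.ofReal c⁻¹)
  rwa [← mul_assoc, ← mul_assoc, ← ENNReal.ofReal_mul (by positivity),
    ← ENNReal.ofReal_mul (by positivity), inv_mul_cancel₀ hc.ne', ENNReal.ofReal_one,
    one_mul] at this

lemma exists_energy_le_of_nonneg {p q : ℝ} (hpq : p.HolderConjugate q) :
    ∃ C : ℝ, 0 ≤ C ∧ ∀ f g : E3 → ℝ, Continuous f → HasCompactSupport f → (∀ x, 0 ≤ f x) →
      Continuous g → HasCompactSupport g → (∀ x, 0 ≤ g x) → ∀ a b : ℝ, 0 < a →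
      energy f g a b ≤ ENNReal.ofReal C * ((∫⁻ x, ENNReal.ofReal (|f x| ^ p)) +
        ∫⁻ x, ENNReal.ofReal (|g x| ^ q)) := by
  rcases le_total 2 p with hp | hp
  · exact exists_energy_le_of_two_le hp hpq
  · have hq : 2 ≤ q := by
      have := hpq.mul_eq_add
      have := hpq.lt
      nlinarith
    obtain ⟨C, hC, h⟩ := exists_energy_le_of_two_le hq hpq.symm
    refine ⟨C, hC, fun f g hf hfc hf0 hg hgc hg0 a b ha => ?_⟩
    rw [energy_comm, add_comm]
    exact h g f hg hgc hg0 hf hfc hf0 a b ha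

lemma heatGrad_sub {f g : E3 → ℝ} (hf : Continuous f) (hfc : HasCompactSupport f)
    (hg : Continuous g) (hgc : HasCompactSupport g) {t : ℝ} (ht : 0 < t) (x : E3) :
    heatGrad (fun y => f y - g y) t x = heatGrad f t x - heatGrad g t x := by
  have e : heat t (fun y => f y - g y) = fun x => heat t f x - heat t g x := by
    ext x
    unfold heat
    rw [← integral_sub
      (integrable_heatKer_mul_of_integrable ht x (hf.integrable_of_hasCompactSupport hfc))
      (integrable_heatKer_mul_of_integrable ht x (hg.integrable_of_hasCompactSupport hgc))]
    simp_rw [mul_sub]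
  have hs : HasCompactSupport fun y => f y - g y := hfc.sub hgc
  rw [← fderiv_heat (hf.fun_sub hg) hs ht, ← fderiv_heat hf hfc ht, ← fderiv_heat hg hgc ht,
    e, fderiv_fun_sub (differentiableAt_heat hf hfc ht x) (differentiableAt_heat hg hgc ht x)]

lemma measurable_heatGrad_right (f : E3 → ℝ) (t : ℝ) : Measurable (heatGrad f t) :=
  (measurable_heatGrad f).comp (measurable_prodMk_left (x := t))

lemma energy_sub_le {f₁ f₂ : E3 → ℝ} (g : E3 → ℝ) (hf₁ : Continuous f₁)
    (hc₁ : HasCompactSupport f₁) (hf₂ : Continuous f₂) (hc₂ : HasCompactSupport f₂)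
    {a b : ℝ} (ha : 0 < a) :
    energy (fun y => f₁ y - f₂ y) g a b ≤ energy f₁ g a b + energy f₂ g a b := by
  have hm : Measurable fun w : ℝ × E3 =>
      ENNReal.ofReal (‖heatGrad f₁ w.1 w.2‖ * ‖heatGrad g w.1 w.2‖) :=
    ((measurable_heatGrad f₁).norm.mul (measurable_heatGrad g).norm).ennreal_ofReal
  have hmi : Measurable fun t =>
      ∫⁻ x, ENNReal.ofReal (‖heatGrad f₁ t x‖ * ‖heatGrad g t x‖) := hm.lintegral_prod_right'
  unfold energy
  rw [← lintegral_add_left hmi]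
  refine setLIntegral_mono' measurableSet_Ioc fun t ht => ?_
  have hmt : Measurable fun x => ENNReal.ofReal (‖heatGrad f₁ t x‖ * ‖heatGrad g t x‖) :=
    ((measurable_heatGrad_right f₁ t).norm.mul (measurable_heatGrad_right g t).norm).ennreal_ofReal
  rw [← lintegral_add_left hmt]
  refine lintegral_mono fun x => ?_
  rw [← ENNReal.ofReal_add (by positivity) (by positivity), ← add_mul,
    heatGrad_sub hf₁ hc₁ hf₂ hc₂ (ha.trans ht.1)]
  exact ENNReal.ofReal_le_ofReal (mul_le_mul_of_nonneg_right (norm_sub_le _ _) (norm_nonneg _))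

/-- The bilinear embedding theorem for the heat semigroup. -/
theorem exists_energy_le {p q : ℝ} (hpq : p.HolderConjugate q) :
    ∃ C : ℝ, 0 ≤ C ∧ ∀ f g : E3 → ℝ, Continuous f → HasCompactSupport f →
      Continuous g → HasCompactSupport g → ∀ a b : ℝ, 0 < a →
      energy f g a b ≤ ENNReal.ofReal C * ((∫⁻ x, ENNReal.ofReal (|f x| ^ p)) +
        ∫⁻ x, ENNReal.ofReal (|g x| ^ q)) := by
  obtain ⟨C, hC, h⟩ := exists_energy_le_of_nonneg hpq
  refine ⟨4 * C, by positivity, fun f g hf hfc hg hgc a b ha => ?_⟩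
  set S := (∫⁻ x, ENNReal.ofReal (|f x| ^ p)) + ∫⁻ x, ENNReal.ofReal (|g x| ^ q)
  have cpos : ∀ {u : E3 → ℝ}, Continuous u → Continuous fun y => max (u y) 0 :=
    fun hu => hu.max continuous_const
  have cneg : ∀ {u : E3 → ℝ}, Continuous u → Continuous fun y => max (-u y) 0 :=
    fun hu => hu.neg.max continuous_const
  have spos : ∀ {u : E3 → ℝ}, HasCompactSupport u → HasCompactSupport fun y => max (u y) 0 :=
    fun hu => hu.comp_left (g := fun s : ℝ => max s 0) (by simp)
  have sneg : ∀ {u : E3 → ℝ}, HasCompactSupport u → HasCompactSupport fun y => max (-u y) 0 :=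
    fun hu => hu.comp_left (g := fun s : ℝ => max (-s) 0) (by simp)
  have decomp : ∀ u : E3 → ℝ, u = fun y => max (u y) 0 - max (-u y) 0 := fun u => by
    ext y
    rcases le_total 0 (u y) with h | h <;> simp [h]
  have hmax : ∀ s : ℝ, |max s 0| ≤ |s| := fun s => by
    rw [abs_of_nonneg (le_max_right _ _)]; exact max_le (le_abs_self s) (abs_nonneg s)
  have hmax' : ∀ s : ℝ, |max (-s) 0| ≤ |s| := fun s => by
    simpa using hmax (-s)
  have piece : ∀ f' g' : E3 → ℝ, Continuous f' → HasCompactSupport f' → (∀ x, 0 ≤ f' x) →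
      Continuous g' → HasCompactSupport g' → (∀ x, 0 ≤ g' x) → (∀ x, |f' x| ≤ |f x|) →
      (∀ x, |g' x| ≤ |g x|) → energy f' g' a b ≤ ENNReal.ofReal C * S := by
    intro f' g' h1 h2 h3 h4 h5 h6 hf' hg'
    refine (h f' g' h1 h2 h3 h4 h5 h6 a b ha).trans (mul_le_mul_right (add_le_add ?_ ?_) _)
    · exact lintegral_mono fun x => ENNReal.ofReal_le_ofReal
        (Real.rpow_le_rpow (abs_nonneg _) (hf' x) hpq.nonneg)
    · exact lintegral_mono fun x => ENNReal.ofReal_le_ofReal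
        (Real.rpow_le_rpow (abs_nonneg _) (hg' x) hpq.symm.nonneg)
  have half : ∀ f' : E3 → ℝ, Continuous f' → HasCompactSupport f' → (∀ x, 0 ≤ f' x) →
      (∀ x, |f' x| ≤ |f x|) → energy f' g a b ≤ ENNReal.ofReal C * S + ENNReal.ofReal C * S := by
    intro f' h1 h2 h3 hf'
    rw [energy_comm, decomp g]
    refine (energy_sub_le f' (cpos hg) (spos hgc) (cneg hg) (sneg hgc) ha).trans ?_
    rw [energy_comm, energy_comm _ f']
    exact add_le_add
      (piece _ _ h1 h2 h3 (cpos hg) (spos hgc) (fun _ => le_max_right _ _) hf' fun x => hmax _)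
      (piece _ _ h1 h2 h3 (cneg hg) (sneg hgc) (fun _ => le_max_right _ _) hf' fun x => hmax' _)
  calc energy f g a b = energy (fun y => max (f y) 0 - max (-f y) 0) g a b := by rw [← decomp f]
    _ ≤ _ := energy_sub_le g (cpos hf) (spos hfc) (cneg hf) (sneg hfc) ha
    _ ≤ _ := add_le_add
      (half _ (cpos hf) (spos hfc) (fun _ => le_max_right _ _) fun x => hmax _)
      (half _ (cneg hf) (sneg hfc) (fun _ => le_max_right _ _) fun x => hmax' _)
    _ = _ := by
      rw [ENNReal.ofReal_mul (by norm_num), ENNReal.ofReal_ofNat]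
      ring

lemma pd_heat_eq_integral {f : E3 → ℝ} (hf : Continuous f) (hc : HasCompactSupport f) {t : ℝ}
    (ht : 0 < t) (x : E3) (i : Fin 3) :
    pd i (heat t f) x = ∫ y, f y * pd i (heatKer t) (x - y) := by
  have h1 := HasFDerivAt.comp (f := fun z : E3 => (t, z)) x
    (hasFDerivAt_heat hf hc ht x) (hasFDerivAt_prodMk_right t x)
  have h2 : fderiv ℝ (heat t f) x = _ := h1.fderiv
  rw [pd, h2, ContinuousLinearMap.comp_apply, ContinuousLinearMap.inr_apply,
    fderiv_heat_apply hf hc ht]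
  simp_rw [fderiv_heatKer_space ht]

lemma abs_pd_heatKer_le {t : ℝ} (ht : 0 < t) (i : Fin 3) (z : E3) :
    |pd i (heatKer t) z| ≤ (1 + 4 * t) / (2 * t) * (4 * Real.pi * t) ^ (-(3 / 2) : ℝ) := by
  rw [pd_heatKer, abs_mul, abs_div, abs_neg, abs_of_pos (heatKer_pos ht z),
    abs_of_pos (by positivity : 0 < 2 * t)]
  have hz : |z i| ≤ ‖z‖ := PiLp.norm_apply_le z i
  have he : ‖z‖ * Real.exp (-‖z‖ ^ 2 / (4 * t)) ≤ 1 + 4 * t := by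
    rw [neg_div, Real.exp_neg, ← div_eq_mul_inv, div_le_iff₀ (Real.exp_pos _)]
    have h1 := Real.add_one_le_exp (‖z‖ ^ 2 / (4 * t))
    have h2 : ‖z‖ ≤ (1 + 4 * t) * (‖z‖ ^ 2 / (4 * t) + 1) := by
      have e : (1 + 4 * t) * (‖z‖ ^ 2 / (4 * t) + 1) =
          ‖z‖ ^ 2 / (4 * t) + ‖z‖ ^ 2 + 1 + 4 * t := by
        field_simp; ring
      have : 0 ≤ ‖z‖ ^ 2 / (4 * t) := by positivity
      rw [e]
      nlinarith [sq_nonneg (‖z‖ - 1), norm_nonneg z]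
    exact h2.trans (mul_le_mul_of_nonneg_left h1 (by positivity))
  calc |z i| / (2 * t) * heatKer t z ≤ ‖z‖ / (2 * t) * heatKer t z :=
        mul_le_mul_of_nonneg_right (by gcongr) (heatKer_pos ht z).le
    _ = ‖z‖ * Real.exp (-‖z‖ ^ 2 / (4 * t)) *
        ((4 * Real.pi * t) ^ (-(3 / 2) : ℝ) / (2 * t)) := by
        unfold heatKer; ring
    _ ≤ (1 + 4 * t) * ((4 * Real.pi * t) ^ (-(3 / 2) : ℝ) / (2 * t)) := by gcongr
    _ = _ := by ring

lemma exists_abs_pd_heat_le {f : E3 → ℝ} (hf : Continuous f) (hc : HasCompactSupport f) {t : ℝ}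
    (ht : 0 < t) (i : Fin 3) : ∃ M, ∀ x, |pd i (heat t f) x| ≤ M := by
  set c := (1 + 4 * t) / (2 * t) * (4 * Real.pi * t) ^ (-(3 / 2) : ℝ)
  refine ⟨∫ y, |f y| * c, fun x => ?_⟩
  rw [pd_heat_eq_integral hf hc ht]
  have hi : Integrable f := hf.integrable_of_hasCompactSupport hc
  refine norm_integral_le_of_norm_le (f := fun y => f y * pd i (heatKer t) (x - y))
    (hi.abs.mul_const c)
    (Filter.Eventually.of_forall fun y => ?_)
  rw [norm_mul]
  exact mul_le_mul_of_nonneg_left (abs_pd_heatKer_le ht i _) (norm_nonneg _)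

lemma pd_heat_eq_heatGrad {f : E3 → ℝ} (hf : Continuous f) (hc : HasCompactSupport f) {t : ℝ}
    (ht : 0 < t) (x : E3) (i : Fin 3) :
    pd i (heat t f) x = heatGrad f t x (EuclideanSpace.single i 1) := by
  rw [pd, fderiv_heat hf hc ht]

lemma abs_pd_heat_le_norm {f : E3 → ℝ} (hf : Continuous f) (hc : HasCompactSupport f) {t : ℝ}
    (ht : 0 < t) (x : E3) (i : Fin 3) : |pd i (heat t f) x| ≤ ‖heatGrad f t x‖ := by
  rw [pd_heat_eq_heatGrad hf hc ht]
  simpa using (heatGrad f t x).le_opNorm (EuclideanSpace.single i 1)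

/-- A second derivative of the heat extension paired with a function splits evenly. -/
lemma integral_heat_pd_pd_mul {g h : E3 → ℝ} (hg : IsTest g) (hh : Continuous h)
    (hc : HasCompactSupport h) {t : ℝ} (ht : 0 < t) (i l : Fin 3) :
    ∫ x, heat (2 * t) (pd i (pd l g)) x * h x =
      -∫ x, pd l (heat t g) x * pd i (heat t h) x := by
  obtain ⟨M, hM0, hM⟩ := exists_abs_le hh hc
  obtain ⟨M', hM'⟩ := exists_abs_pd_heat_le hh hc ht i
  have iG := integrable_heat ht ((hg.pd l).pd i).integrable
  have il := integrable_heat ht (hg.pd l).integrable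
  have one_le : (1 : WithTop ℕ∞) ≤ ((⊤ : ℕ∞) : WithTop ℕ∞) := by exact_mod_cast le_top
  have hbh : ∀ x, ‖heat t h x‖ ≤ M := abs_heat_le ht hM
  have ch := continuous_heat ht hh hc
  rw [two_mul, ← heat_heat ht ht ((hg.pd l).pd i).integrable,
    integral_heat_mul ht iG hh.aestronglyMeasurable hM]
  have e1 : ∀ x, heat t (pd i (pd l g)) x = pd i (heat t (pd l g)) x := fun x =>
    (pd_heat ((hg.pd l).1.of_le one_le) (hg.pd l).2 ht x i).symm
  have e2 : ∀ x, pd l (heat t g) x = heat t (pd l g) x := fun x =>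
    pd_heat (hg.1.of_le one_le) hg.2 ht x l
  have mpd : Measurable fun x => pd i (heat t h) x := measurable_fderiv_apply_const ℝ _ _
  have ibp := integral_mul_fderiv_eq_neg_fderiv_mul_of_integrable (μ := (volume : Measure E3))
    (f := heat t (pd l g)) (g := heat t h) (v := EuclideanSpace.single i 1) (𝕜 := ℝ)
    ?_ ?_ ?_ (fun x _ => differentiableAt_heat (hg.pd l).continuous (hg.pd l).2 ht x)
    (fun x _ => differentiableAt_heat hh hc ht x)
  · simp_rw [e1, e2]
    have ibp' : ∫ x, heat t (pd l g) x * pd i (heat t h) x =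
      -∫ x, pd i (heat t (pd l g)) x * heat t h x := ibp
    rw [ibp', neg_neg]
  · have : Integrable fun x => heat t (pd i (pd l g)) x * heat t h x :=
      iG.mul_bdd (c := M) ch.aestronglyMeasurable (Filter.Eventually.of_forall hbh)
    simp_rw [e1] at this
    exact this
  · exact il.mul_bdd (c := M') mpd.aestronglyMeasurable (Filter.Eventually.of_forall hM')
  · exact il.mul_bdd (c := M) ch.aestronglyMeasurable (Filter.Eventually.of_forall hbh)

lemma enorm_integral_heat_pd_pd_mul_le {g h : E3 → ℝ} (hg : IsTest g) (hh : Continuous h)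
    (hc : HasCompactSupport h) {t : ℝ} (ht : 0 < t) (i l : Fin 3) :
    ‖∫ x, heat (2 * t) (pd i (pd l g)) x * h x‖ₑ ≤
      ∫⁻ x, ENNReal.ofReal (‖heatGrad g t x‖ * ‖heatGrad h t x‖) := by
  rw [integral_heat_pd_pd_mul hg hh hc ht, enorm_neg]
  refine (enorm_integral_le_lintegral_enorm _).trans (lintegral_mono fun x => ?_)
  rw [← ofReal_norm, norm_mul]
  exact ENNReal.ofReal_le_ofReal (mul_le_mul (abs_pd_heat_le_norm hg.continuous hg.2 ht x l)
    (abs_pd_heat_le_norm hh hc ht x i) (norm_nonneg _) (norm_nonneg _))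

lemma hasDerivAt_integral_heat_mul {F h : E3 → ℝ} (hF : IsTest F) (hh : Continuous h)
    (hc : HasCompactSupport h) {t : ℝ} (ht : 0 < t) :
    HasDerivAt (fun s => ∫ x, heat s F x * h x)
      (∫ x, (∑ i, heat t (pd i (pd i F)) x) * h x) t := by
  choose M _ hM using fun i => exists_abs_le ((hF.pd i).pd i).continuous ((hF.pd i).pd i).2
  have hi : Integrable h := hh.integrable_of_hasCompactSupport hc
  have hct : ∀ {s : ℝ}, 0 < s → Continuous fun x => heat s F x * h x := fun hs =>
    (continuous_heat hs hF.continuous hF.2).mul hh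
  refine (hasDerivAt_integral_of_dominated_loc_of_deriv_le (μ := volume)
    (F := fun s x => heat s F x * h x) (s := Ioi 0) (bound := fun x => (∑ i, M i) * |h x|)
    (F' := fun s x => (∑ i, heat s (pd i (pd i F)) x) * h x)
    (Ioi_mem_nhds ht) ?_ ?_ ?_ ?_ (hi.abs.const_mul _) ?_).2
  · filter_upwards [Ioi_mem_nhds ht] with s hs using (hct hs).aestronglyMeasurable
  · exact (hct ht).integrable_of_hasCompactSupport hc.mul_left
  · refine Continuous.aestronglyMeasurable (Continuous.mul ?_ hh)
    exact continuous_finsetSum _ fun i _ =>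
      continuous_heat ht ((hF.pd i).pd i).continuous ((hF.pd i).pd i).2
  · refine Filter.Eventually.of_forall fun x s hs => ?_
    rw [norm_mul]
    refine mul_le_mul_of_nonneg_right ((norm_sum_le _ _).trans ?_) (norm_nonneg _)
    exact Finset.sum_le_sum fun i _ => abs_heat_le hs (hM i) x
  · exact Filter.Eventually.of_forall fun x s hs => (hasDerivAt_heat hF hs x).mul_const _

lemma heat_sub {f g : E3 → ℝ} (hf : Integrable f) (hg : Integrable g) {t : ℝ} (ht : 0 < t)
    (x : E3) : heat t (fun y => f y - g y) x = heat t f x - heat t g x := by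
  unfold heat
  rw [← integral_sub (integrable_heatKer_mul_of_integrable ht x hf)
    (integrable_heatKer_mul_of_integrable ht x hg)]
  simp_rw [mul_sub]

lemma sum_heat_pd_pd {F G : E3 → ℝ} (hF : IsTest F) (hG : ∀ x, ∑ k, pd k (pd k F) x = G x)
    {t : ℝ} (ht : 0 < t) (x : E3) : ∑ i, heat t (pd i (pd i F)) x = heat t G x := by
  unfold heat
  rw [← integral_finsetSum _ fun i _ =>
    integrable_heatKer_mul_of_integrable ht x ((hF.pd i).pd i).integrable]
  simp_rw [← Finset.mul_sum, hG]

lemma enorm_integral_heat_sub_le {F g₁ g₂ h : E3 → ℝ} {i l m : Fin 3} (hF : IsTest F)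
    (hg₁ : IsTest g₁) (hg₂ : IsTest g₂) (hh : Continuous h) (hc : HasCompactSupport h)
    (hL : ∀ x, ∑ k, pd k (pd k F) x = pd i (pd l g₁) x - pd i (pd m g₂) x) {a b : ℝ}
    (ha : 0 < a) (hab : a ≤ b) :
    ‖(∫ x, heat (2 * b) F x * h x) - ∫ x, heat (2 * a) F x * h x‖ₑ ≤
      2 * (energy g₁ h a b + energy g₂ h a b) := by
  have hd : ∀ s : ℝ, 0 < s → HasDerivAt (fun s => ∫ x, heat (2 * s) F x * h x)
      ((∫ x, (∑ i, heat (2 * s) (pd i (pd i F)) x) * h x) * 2) s := fun s hs =>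
    (hasDerivAt_integral_heat_mul hF hh hc (by positivity : 0 < 2 * s)).comp s
      (by simpa using (hasDerivAt_id s).const_mul 2)
  have iB : ∀ {g : E3 → ℝ} (_ : IsTest g) (i l : Fin 3) {s : ℝ}, 0 < s →
      Integrable fun x => heat (2 * s) (pd i (pd l g)) x * h x := fun {g} hg i l s hs =>
    ((continuous_heat (by positivity) ((hg.pd l).pd i).continuous
      ((hg.pd l).pd i).2).mul hh).integrable_of_hasCompactSupport hc.mul_left
  have hb : ∀ s : ℝ, 0 < s → ‖(∫ x, (∑ i, heat (2 * s) (pd i (pd i F)) x) * h x) * 2‖ₑ ≤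
      2 * ((∫⁻ x, ENNReal.ofReal (‖heatGrad g₁ s x‖ * ‖heatGrad h s x‖)) +
        ∫⁻ x, ENNReal.ofReal (‖heatGrad g₂ s x‖ * ‖heatGrad h s x‖)) := by
    intro s hs
    have hs2 : 0 < 2 * s := by positivity
    rw [mul_comm, enorm_mul]
    have h2 : ‖(2 : ℝ)‖ₑ = 2 := by rw [← ofReal_norm]; norm_num
    rw [h2]
    refine mul_le_mul_right ?_ _
    have e : ∀ x, (∑ i, heat (2 * s) (pd i (pd i F)) x) * h x =
        heat (2 * s) (pd i (pd l g₁)) x * h x - heat (2 * s) (pd i (pd m g₂)) x * h x := by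
      intro x
      rw [sum_heat_pd_pd hF hL hs2, heat_sub ((hg₁.pd l).pd i).integrable
        ((hg₂.pd m).pd i).integrable hs2, sub_mul]
    simp_rw [e]
    rw [integral_sub (iB hg₁ i l hs) (iB hg₂ i m hs)]
    exact (enorm_sub_le).trans (add_le_add (enorm_integral_heat_pd_pd_mul_le hg₁ hh hc hs i l)
      (enorm_integral_heat_pd_pd_mul_le hg₂ hh hc hs i m))
  set ψ := fun s => ∫ x, heat (2 * s) F x * h x
  have hm : Measurable fun w : ℝ × E3 =>
      ENNReal.ofReal (‖heatGrad g₁ w.1 w.2‖ * ‖heatGrad h w.1 w.2‖) :=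
    ((measurable_heatGrad g₁).norm.mul (measurable_heatGrad h).norm).ennreal_ofReal
  have hmi : Measurable fun t =>
      ∫⁻ x, ENNReal.ofReal (‖heatGrad g₁ t x‖ * ‖heatGrad h t x‖) := hm.lintegral_prod_right'
  have hle : ∫⁻ s in Ioc a b, ‖deriv ψ s‖ₑ ≤ 2 * (energy g₁ h a b + energy g₂ h a b) := by
    unfold energy
    rw [← lintegral_add_left hmi, ← lintegral_const_mul' _ _ (by simp)]
    refine setLIntegral_mono' measurableSet_Ioc fun s hs => ?_
    rw [(hd s (ha.trans hs.1)).deriv]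
    exact hb s (ha.trans hs.1)
  by_cases htop : 2 * (energy g₁ h a b + energy g₂ h a b) = ⊤
  · rw [htop]; exact le_top
  have hψi : IntervalIntegrable (deriv ψ) volume a b := by
    rw [intervalIntegrable_iff_integrableOn_Ioc_of_le hab]
    exact ⟨(measurable_deriv ψ).aestronglyMeasurable, hle.trans_lt (lt_top_iff_ne_top.2 htop)⟩
  have hftc := intervalIntegral.integral_eq_sub_of_hasDerivAt (f := ψ) (f' := deriv ψ)
    (fun s hs => ?_) hψi
  · change ‖ψ b - ψ a‖ₑ ≤ _
    rw [← hftc, intervalIntegral.integral_of_le hab]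
    exact (enorm_integral_le_lintegral_enorm _).trans hle
  · rw [uIcc_of_le hab] at hs
    exact (hd s (ha.trans_le hs.1)).differentiableAt.hasDerivAt

lemma heat_sq_eq_integral {δ : ℝ} (hδ : 0 < δ) (f : E3 → ℝ) (x : E3) :
    heat (δ ^ 2) f x = ∫ y, heatKer 1 y * f (x - δ • y) := by
  have h := Measure.integral_comp_smul_of_nonneg (μ := (volume : Measure E3))
    (fun y => heatKer (δ ^ 2) y * f (x - y)) δ (hR := hδ.le)
  rw [← heat_eq_integral_sub, finrank_euclideanSpace_fin, smul_eq_mul] at h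
  have hk : ∀ y, heatKer (δ ^ 2) (δ • y) = (δ ^ 3)⁻¹ * heatKer 1 y := by
    intro y
    have := heatKer_sqrt_smul (pow_pos hδ 2) y
    rw [Real.sqrt_sq hδ.le] at this
    rw [this, ← Real.rpow_natCast, ← Real.rpow_mul hδ.le, ← Real.rpow_natCast δ 3,
      ← Real.rpow_neg hδ.le]
    norm_num
  simp_rw [hk, mul_assoc] at h
  rw [integral_const_mul] at h
  exact (mul_left_cancel₀ (by positivity) h).symm

lemma tendsto_heat_sq {f : E3 → ℝ} (hf : Continuous f) (hc : HasCompactSupport f) (x : E3)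
    {δ : ℕ → ℝ} (hδ : ∀ n, 0 < δ n) (hlim : Filter.Tendsto δ Filter.atTop (nhds 0)) :
    Filter.Tendsto (fun n => heat (δ n ^ 2) f x) Filter.atTop (nhds (f x)) := by
  obtain ⟨M, _, hM⟩ := exists_abs_le hf hc
  have hfx : f x = ∫ y, heatKer 1 y * f x := by
    rw [integral_mul_const, integral_heatKer one_pos, one_mul]
  simp_rw [fun n => heat_sq_eq_integral (hδ n) f x]
  rw [hfx]
  refine tendsto_integral_of_dominated_convergence (fun y => heatKer 1 y * M)
    (fun n => ((continuous_heatKer 1).mul (hf.comp (by fun_prop))).aestronglyMeasurable)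
    ((integrable_heatKer one_pos).mul_const M) (fun n => Filter.Eventually.of_forall fun y => ?_)
    (Filter.Eventually.of_forall fun y => ?_)
  · rw [norm_mul, Real.norm_of_nonneg (heatKer_pos one_pos y).le]
    exact mul_le_mul_of_nonneg_left (hM _) (heatKer_pos one_pos y).le
  · refine Filter.Tendsto.const_mul _ ?_
    have : Filter.Tendsto (fun n => x - δ n • y) Filter.atTop (nhds x) := by
      simpa using (hlim.smul_const y).const_sub x
    exact (hf.tendsto x).comp this

lemma tendsto_integral_heat_sq_mul {F h : E3 → ℝ} (hF : Continuous F) (hFc : HasCompactSupport F)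
    (hh : Continuous h) (hc : HasCompactSupport h)
    {δ : ℕ → ℝ} (hδ : ∀ n, 0 < δ n) (hlim : Filter.Tendsto δ Filter.atTop (nhds 0)) :
    Filter.Tendsto (fun n => ∫ x, heat (δ n ^ 2) F x * h x) Filter.atTop
      (nhds (∫ x, F x * h x)) := by
  obtain ⟨M, _, hM⟩ := exists_abs_le hF hFc
  have hi : Integrable h := hh.integrable_of_hasCompactSupport hc
  refine tendsto_integral_of_dominated_convergence (fun x => M * |h x|)
    (fun n => ((continuous_heat (pow_pos (hδ n) 2) hF hFc).mul hh).aestronglyMeasurable)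
    (hi.abs.const_mul M) (fun n => Filter.Eventually.of_forall fun x => ?_)
    (Filter.Eventually.of_forall fun x => (tendsto_heat_sq hF hFc x hδ hlim).mul_const _)
  rw [norm_mul]
  exact mul_le_mul_of_nonneg_right (abs_heat_le (pow_pos (hδ n) 2) hM x) (norm_nonneg _)

lemma abs_integral_heat_mul_le {F h : E3 → ℝ} (hF : Integrable F) (hh : Integrable h) {t : ℝ}
    (ht : 0 < t) : |∫ x, heat t F x * h x| ≤
      (4 * Real.pi * t) ^ (-(3 / 2) : ℝ) * ((∫ y, |F y|) * ∫ x, |h x|) := by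
  rw [← mul_assoc, ← integral_const_mul]
  refine norm_integral_le_of_norm_le (f := fun x => heat t F x * h x) (hh.abs.const_mul _)
    (Filter.Eventually.of_forall fun x => ?_)
  rw [norm_mul]
  exact mul_le_mul_of_nonneg_right (abs_heat_le_integral ht hF x) (norm_nonneg _)

lemma tendsto_integral_heat_mul_atTop {F h : E3 → ℝ} (hF : Integrable F) (hh : Integrable h)
    {t : ℕ → ℝ} (ht : ∀ n, 0 < t n) (hlim : Filter.Tendsto t Filter.atTop Filter.atTop) :
    Filter.Tendsto (fun n => ∫ x, heat (t n) F x * h x) Filter.atTop (nhds 0) := by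
  refine squeeze_zero_norm (fun n => abs_integral_heat_mul_le hF hh (ht n)) ?_
  have h1 : Filter.Tendsto (fun n => 4 * Real.pi * t n) Filter.atTop Filter.atTop :=
    hlim.const_mul_atTop (by positivity)
  simpa using ((tendsto_rpow_neg_atTop (by norm_num : (0 : ℝ) < 3 / 2)).comp h1).mul_const _

lemma enorm_integral_mul_le {p q C : ℝ}
    (hC : ∀ f g : E3 → ℝ, Continuous f → HasCompactSupport f →
      Continuous g → HasCompactSupport g → ∀ a b : ℝ, 0 < a →
      energy f g a b ≤ ENNReal.ofReal C * ((∫⁻ x, ENNReal.ofReal (|f x| ^ p)) +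
        ∫⁻ x, ENNReal.ofReal (|g x| ^ q)))
    {F g₁ g₂ h : E3 → ℝ} {i l m : Fin 3} (hF : IsTest F)
    (hg₁ : IsTest g₁) (hg₂ : IsTest g₂) (hh : Continuous h) (hc : HasCompactSupport h)
    (hL : ∀ x, ∑ k, pd k (pd k F) x = pd i (pd l g₁) x - pd i (pd m g₂) x) :
    ‖∫ x, F x * h x‖ₑ ≤ 2 * ENNReal.ofReal C * ((∫⁻ x, ENNReal.ofReal (|g₁ x| ^ p)) +
      (∫⁻ x, ENNReal.ofReal (|g₂ x| ^ p)) + 2 * ∫⁻ x, ENNReal.ofReal (|h x| ^ q)) := by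
  have hpos : ∀ n : ℕ, (0 : ℝ) < 1 / ((n : ℝ) + 1) := fun n => Nat.one_div_pos_of_nat
  have hle : ∀ n : ℕ, (1 : ℝ) / ((n : ℝ) + 1) ≤ 1 := fun n => by
    rw [div_le_one (by positivity)]; linarith [(Nat.cast_nonneg n : (0 : ℝ) ≤ n)]
  have l1 := tendsto_integral_heat_sq_mul hF.continuous hF.2 hh hc hpos
    tendsto_one_div_add_atTop_nhds_zero_nat
  have l2 := tendsto_integral_heat_mul_atTop hF.integrable
    (hh.integrable_of_hasCompactSupport hc) (t := fun n : ℕ => 2 * ((n : ℝ) + 1))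
    (fun n => by positivity)
    ((Filter.tendsto_atTop_add_const_right _ 1 tendsto_natCast_atTop_atTop).const_mul_atTop two_pos)
  have l3 := (l2.sub l1).enorm
  rw [zero_sub, enorm_neg] at l3
  refine le_of_tendsto' l3 fun n => ?_
  have ha : 0 < (1 / ((n : ℝ) + 1)) ^ 2 / 2 := by have := hpos n; positivity
  have hab : (1 / ((n : ℝ) + 1)) ^ 2 / 2 ≤ (n : ℝ) + 1 := by
    nlinarith [hpos n, hle n, (Nat.cast_nonneg n : (0 : ℝ) ≤ n)]
  have key := enorm_integral_heat_sub_le hF hg₁ hg₂ hh hc hL ha hab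
  rw [mul_div_cancel₀ _ two_ne_zero] at key
  refine key.trans ?_
  rw [mul_assoc]
  refine mul_le_mul_right ((add_le_add (hC g₁ h hg₁.continuous hg₁.2 hh hc _ _ ha)
    (hC g₂ h hg₂.continuous hg₂.2 hh hc _ _ ha)).trans (le_of_eq ?_)) _
  ring

/-- The signed power `s |s|^(α-1)`. -/
def signedPow (α s : ℝ) : ℝ := max s 0 ^ α - max (-s) 0 ^ α

lemma continuous_signedPow {α : ℝ} (hα : 0 < α) : Continuous (signedPow α) := by
  unfold signedPow
  exact ((by fun_prop : Continuous fun s : ℝ => max s 0).rpow_const fun _ => Or.inr hα.le).sub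
    ((by fun_prop : Continuous fun s : ℝ => max (-s) 0).rpow_const fun _ => Or.inr hα.le)

lemma signedPow_zero (α : ℝ) : signedPow α 0 = 0 := by simp [signedPow]

lemma abs_signedPow {α : ℝ} (hα : 0 < α) (s : ℝ) : |signedPow α s| = |s| ^ α := by
  unfold signedPow
  rcases le_total 0 s with hs | hs
  · rw [max_eq_left hs, max_eq_right (by linarith), Real.zero_rpow hα.ne', sub_zero,
      abs_of_nonneg (by positivity), abs_of_nonneg hs]
  · have : 0 ≤ -s := by linarith
    rw [max_eq_right hs, max_eq_left this, Real.zero_rpow hα.ne', zero_sub, abs_neg,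
      abs_of_nonneg (by positivity), abs_of_nonpos hs]

lemma mul_signedPow {α : ℝ} (hα : 0 < α) (s : ℝ) : s * signedPow α s = |s| ^ (α + 1) := by
  unfold signedPow
  rcases le_total 0 s with hs | hs
  · rw [max_eq_left hs, max_eq_right (by linarith), Real.zero_rpow hα.ne', sub_zero,
      abs_of_nonneg hs, Real.rpow_add_one' hs (by linarith), mul_comm]
  · have : 0 ≤ -s := by linarith
    rw [max_eq_right hs, max_eq_left this, Real.zero_rpow hα.ne', zero_sub,
      abs_of_nonpos hs, Real.rpow_add_one' this (by linarith)]
    ring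

/-- `L^p` bound for a solution of the Poisson equation with second-order source. -/
theorem exists_lintegral_rpow_le {p : ℝ} (hp : 1 < p) :
    ∃ C : ℝ, 0 ≤ C ∧ ∀ (F g₁ g₂ : E3 → ℝ) (i l m : Fin 3), IsTest F → IsTest g₁ → IsTest g₂ →
      (∀ x, ∑ k, pd k (pd k F) x = pd i (pd l g₁) x - pd i (pd m g₂) x) →
      ∫⁻ x, ENNReal.ofReal (|F x| ^ p) ≤ ENNReal.ofReal C *
        ((∫⁻ x, ENNReal.ofReal (|g₁ x| ^ p)) + ∫⁻ x, ENNReal.ofReal (|g₂ x| ^ p)) := by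
  have hpq := Real.HolderConjugate.conjExponent hp
  set q := p.conjExponent
  obtain ⟨C, hC0, hC⟩ := exists_energy_le hpq
  have hq : 0 < q - 1 := by linarith [hpq.symm.lt]
  have hp1 : 0 < p - 1 := by linarith
  set μ : ℝ := (1 / (8 * C + 8)) ^ (1 / (q - 1)) with hμ
  have hμ0 : 0 < μ := by positivity
  have hμq : 4 * C * μ ^ q ≤ μ / 2 := by
    have e1 : μ ^ (q - 1) = 1 / (8 * C + 8) := by
      rw [hμ, ← Real.rpow_mul (by positivity), one_div_mul_cancel hq.ne', Real.rpow_one]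
    have e2 : μ ^ q = μ * (1 / (8 * C + 8)) := by
      rw [← e1, Real.rpow_sub_one hμ0.ne']; field_simp
    rw [e2]
    have : C * (1 / (8 * C + 8)) ≤ 1 / 8 := by
      rw [mul_one_div, div_le_iff₀ (by positivity)]; linarith
    nlinarith
  refine ⟨4 * C / μ, by positivity, fun F g₁ g₂ i l m hF hg₁ hg₂ hL => ?_⟩
  set N := ∫⁻ x, ENNReal.ofReal (|F x| ^ p) with hN
  set G := (∫⁻ x, ENNReal.ofReal (|g₁ x| ^ p)) + ∫⁻ x, ENNReal.ofReal (|g₂ x| ^ p)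
  have hNtop : N ≠ ⊤ := lintegral_rpow_ne_top hF.continuous hF.2 (by linarith)
  have key := enorm_integral_mul_le hC hF hg₁ hg₂ (h := fun x => μ * signedPow (p - 1) (F x))
    (continuous_const.mul ((continuous_signedPow hp1).comp hF.continuous))
    (hF.2.comp_left (g := fun s => μ * signedPow (p - 1) s) (by simp [signedPow_zero])) hL
  have e1 : ‖∫ x, F x * (μ * signedPow (p - 1) (F x))‖ₑ = ENNReal.ofReal μ * N := by
    have e : ∀ x, F x * (μ * signedPow (p - 1) (F x)) = μ * |F x| ^ p := fun x => by
      rw [mul_left_comm, mul_signedPow hp1, sub_add_cancel]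
    simp_rw [e]
    have hi : Integrable fun x => |F x| ^ p :=
      (hF.continuous.abs.rpow_const fun _ => Or.inr (by linarith)).integrable_of_hasCompactSupport
        (hF.2.comp_left (g := fun s : ℝ => |s| ^ p) (by simp [(by linarith : p ≠ 0)]))
    rw [integral_const_mul, enorm_mul, Real.enorm_of_nonneg hμ0.le,
      Real.enorm_of_nonneg (integral_nonneg fun x => by positivity),
      ofReal_integral_eq_lintegral_ofReal hi (Filter.Eventually.of_forall fun x => by positivity)]
  have e2 : ∫⁻ x, ENNReal.ofReal (|μ * signedPow (p - 1) (F x)| ^ q) =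
      ENNReal.ofReal (μ ^ q) * N := by
    rw [hN, ← lintegral_const_mul' _ _ ENNReal.ofReal_ne_top]
    refine lintegral_congr fun x => ?_
    rw [abs_mul, abs_signedPow hp1, Real.mul_rpow (abs_nonneg _) (by positivity),
      ← Real.rpow_mul (abs_nonneg _), abs_of_pos hμ0, hpq.sub_one_mul_conj,
      ENNReal.ofReal_mul (by positivity)]
  rw [e1, e2] at key
  have e3 : 2 * ENNReal.ofReal C * (G + 2 * (ENNReal.ofReal (μ ^ q) * N)) =
      ENNReal.ofReal (2 * C) * G + ENNReal.ofReal (4 * C * μ ^ q) * N := by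
    rw [ENNReal.ofReal_mul two_pos.le, ENNReal.ofReal_mul (by positivity),
      ENNReal.ofReal_mul (by norm_num)]
    have : ENNReal.ofReal 4 = 2 * 2 := by
      rw [← ENNReal.ofReal_ofNat 2, ← ENNReal.ofReal_mul two_pos.le]; norm_num
    rw [this, ENNReal.ofReal_ofNat]
    ring
  have key2 : ENNReal.ofReal (μ / 2) * N + ENNReal.ofReal (μ / 2) * N ≤
      ENNReal.ofReal (2 * C) * G + ENNReal.ofReal (μ / 2) * N := by
    rw [← add_mul, ← ENNReal.ofReal_add (by positivity) (by positivity), add_halves]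
    refine key.trans (e3.le.trans (add_le_add le_rfl ?_))
    gcongr
  rw [ENNReal.add_le_add_iff_right (ENNReal.mul_ne_top ENNReal.ofReal_ne_top hNtop)] at key2
  calc N = ENNReal.ofReal (2 / μ) * (ENNReal.ofReal (μ / 2) * N) := by
        rw [← mul_assoc, ← ENNReal.ofReal_mul (by positivity)]
        have : 2 / μ * (μ / 2) = 1 := by field_simp
        simp [this]
    _ ≤ ENNReal.ofReal (2 / μ) * (ENNReal.ofReal (2 * C) * G) := mul_le_mul_right key2 _
    _ = ENNReal.ofReal (4 * C / μ) * G := by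
        rw [← mul_assoc, ← ENNReal.ofReal_mul (by positivity)]
        congr 2; ring

lemma eLpNorm_eq_lintegral_abs {p : ℝ} (hp : 1 < p) (f : E3 → ℝ) :
    eLpNorm f (ENNReal.ofReal p) volume = (∫⁻ x, ENNReal.ofReal (|f x| ^ p)) ^ (1 / p) := by
  have h0 : 0 < p := by linarith
  rw [eLpNorm_eq_lintegral_rpow_enorm_toReal (by simpa using h0) ENNReal.ofReal_ne_top,
    ENNReal.toReal_ofReal h0.le]
  congr 1
  refine lintegral_congr fun x => ?_
  rw [← ENNReal.ofReal_rpow_of_nonneg (abs_nonneg _) h0.le, ← ofReal_norm, Real.norm_eq_abs]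

lemma exists_eLpNorm_le {p : ℝ} (hp : 1 < p) :
    ∃ C : ℝ≥0∞, C ≠ ⊤ ∧ ∀ (F g₁ g₂ : E3 → ℝ) (i l m : Fin 3), IsTest F → IsTest g₁ → IsTest g₂ →
      (∀ x, ∑ k, pd k (pd k F) x = pd i (pd l g₁) x - pd i (pd m g₂) x) →
      eLpNorm F (ENNReal.ofReal p) volume ≤ C *
        (eLpNorm g₁ (ENNReal.ofReal p) volume + eLpNorm g₂ (ENNReal.ofReal p) volume) := by
  obtain ⟨C, -, hC⟩ := exists_lintegral_rpow_le hp
  have h0 : 0 < p := by linarith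
  have hp' : 0 ≤ 1 / p := by positivity
  refine ⟨ENNReal.ofReal C ^ (1 / p), ENNReal.rpow_ne_top_of_nonneg hp' ENNReal.ofReal_ne_top,
    fun F g₁ g₂ i l m hF hg₁ hg₂ hL => ?_⟩
  simp_rw [eLpNorm_eq_lintegral_abs hp]
  refine (ENNReal.rpow_le_rpow (hC F g₁ g₂ i l m hF hg₁ hg₂ hL) hp').trans ?_
  rw [ENNReal.mul_rpow_of_nonneg _ _ hp']
  exact mul_le_mul_right (ENNReal.rpow_add_le_add_rpow _ _ hp' (by
    rw [div_le_one h0]; exact hp.le)) _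

lemma pd_comm {f : E3 → ℝ} (hf : IsTest f) (i j : Fin 3) : pd i (pd j f) = pd j (pd i f) := by
  have h2 : ContDiff ℝ 2 f := contDiff_infty.1 hf.1 2
  have hd : Differentiable ℝ (fderiv ℝ f) :=
    (h2.fderiv_right (m := 1) (by norm_num)).differentiable one_ne_zero
  have e : ∀ (i j : Fin 3) x, pd i (pd j f) x = fderiv ℝ (fderiv ℝ f) x
      (EuclideanSpace.single i 1) (EuclideanSpace.single j 1) := by
    intro i j x
    have : HasFDerivAt (pd j f) _ x :=
      (hd x).hasFDerivAt.clm_apply (hasFDerivAt_const (EuclideanSpace.single j (1 : ℝ)) x)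
    rw [pd, this.fderiv]
    simp
  ext x
  rw [e, e]
  exact (h2.contDiffAt (x := x)).isSymmSndFDerivAt (by simp) _ _

lemma pd_fun_sub {f g : E3 → ℝ} (hf : IsTest f) (hg : IsTest g) (i : Fin 3) (x : E3) :
    pd i (fun y => f y - g y) x = pd i f x - pd i g x := by
  unfold pd
  rw [fderiv_fun_sub (hf.differentiable x) (hg.differentiable x)]
  rfl

lemma pd_fun_sum {f : Fin 3 → E3 → ℝ} (hf : ∀ k, IsTest (f k)) (i : Fin 3) (x : E3) :
    pd i (fun y => ∑ k, f k y) x = ∑ k, pd i (f k) x := by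
  unfold pd
  rw [fderiv_fun_sum fun k _ => (hf k).differentiable x]
  simp

lemma IsTest.sub {f g : E3 → ℝ} (hf : IsTest f) (hg : IsTest g) :
    IsTest fun x => f x - g x :=
  ⟨hf.1.sub hg.1, hf.2.sub hg.2⟩

/-- The entries of the antisymmetrised gradient, i.e. the components of the curl. -/
def curlEntry (b : Fin 3 → E3 → ℝ) (k l : Fin 3) (x : E3) : ℝ := pd k (b l) x - pd l (b k) x

lemma isTest_curlEntry {b : Fin 3 → E3 → ℝ} (hb : ∀ j, IsTest (b j)) (k l : Fin 3) :
    IsTest (curlEntry b k l) :=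
  ((hb l).pd k).sub ((hb k).pd l)

lemma sum_pd_pd_eq_curlEntry {b : Fin 3 → E3 → ℝ} (hb : ∀ j, IsTest (b j))
    (hdiv : ∀ x, ∑ k, pd k (b k) x = 0) (j : Fin 3) (x : E3) :
    ∑ k, pd k (pd k (b j)) x =
      pd (j + 1) (curlEntry b (j + 1) j) x - pd (j + 2) (curlEntry b j (j + 2)) x := by
  have hd : ∑ k, pd j (pd k (b k)) x = 0 := by
    rw [← pd_fun_sum (fun k => (hb k).pd k)]
    simp_rw [hdiv]
    simp [pd]
  have h1 : pd (j + 1) (curlEntry b (j + 1) j) x =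
      pd (j + 1) (pd (j + 1) (b j)) x - pd j (pd (j + 1) (b (j + 1))) x := by
    rw [pd_comm (hb _) j]
    exact pd_fun_sub ((hb _).pd _) ((hb _).pd _) _ _
  have h2 : pd (j + 2) (curlEntry b j (j + 2)) x =
      pd j (pd (j + 2) (b (j + 2))) x - pd (j + 2) (pd (j + 2) (b j)) x := by
    rw [pd_comm (hb _) j]
    exact pd_fun_sub ((hb _).pd _) ((hb _).pd _) _ _
  have hs : ∀ f : Fin 3 → ℝ, ∑ k, f k = f j + f (j + 1) + f (j + 2) := by
    intro f
    rw [Fin.sum_univ_three]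
    fin_cases j <;> simp <;> ring
  rw [h1, h2, hs]
  rw [hs] at hd
  linarith

lemma sum_pd_pd_pd_eq_curlEntry {b : Fin 3 → E3 → ℝ} (hb : ∀ j, IsTest (b j))
    (hdiv : ∀ x, ∑ k, pd k (b k) x = 0) (i j : Fin 3) (x : E3) :
    ∑ k, pd k (pd k (pd i (b j))) x = pd i (pd (j + 1) (curlEntry b (j + 1) j)) x -
      pd i (pd (j + 2) (curlEntry b j (j + 2))) x := by
  have e : ∀ k, pd k (pd k (pd i (b j))) = pd i (pd k (pd k (b j))) := fun k => by
    rw [pd_comm (hb j) k i, pd_comm ((hb j).pd k) k i]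
  simp_rw [e]
  rw [← pd_fun_sum (fun k => ((hb j).pd k).pd k),
    ← pd_fun_sub ((isTest_curlEntry hb _ _).pd _) ((isTest_curlEntry hb _ _).pd _)]
  simp_rw [sum_pd_pd_eq_curlEntry hb hdiv]

/-- The gradient of a divergence-free field is controlled by its curl in `L^p`. -/
theorem exists_eLpNorm_pd_le_curlEntry {p : ℝ} (hp : 1 < p) :
    ∃ C : ℝ≥0∞, C ≠ ⊤ ∧ ∀ b : Fin 3 → E3 → ℝ, (∀ j, IsTest (b j)) →
      (∀ x, ∑ k, pd k (b k) x = 0) → ∀ A : ℝ≥0∞,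
      (∀ k l, eLpNorm (curlEntry b k l) (ENNReal.ofReal p) volume ≤ A) → ∀ i j,
      eLpNorm (pd i (b j)) (ENNReal.ofReal p) volume ≤ C * A := by
  obtain ⟨C, hC0, hC⟩ := exists_eLpNorm_le hp
  refine ⟨C * 2, ENNReal.mul_ne_top hC0 (by simp), fun b hb hdiv A hA i j => ?_⟩
  refine (hC _ _ _ i (j + 1) (j + 2) ((hb j).pd i) (isTest_curlEntry hb _ _)
    (isTest_curlEntry hb _ _) (sum_pd_pd_pd_eq_curlEntry hb hdiv i j)).trans ?_
  rw [mul_assoc, two_mul]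
  exact mul_le_mul_right (add_le_add (hA _ _) (hA _ _)) _

lemma curlEntry_pd {b : Fin 3 → E3 → ℝ} (hb : ∀ j, IsTest (b j)) (n k l : Fin 3) :
    curlEntry (fun j => pd n (b j)) k l = pd n (curlEntry b k l) := by
  ext x
  unfold curlEntry
  rw [pd_fun_sub ((hb _).pd _) ((hb _).pd _), pd_comm (hb l) k n, pd_comm (hb k) l n]

lemma sum_pd_pd_eq_zero {b : Fin 3 → E3 → ℝ} (hb : ∀ j, IsTest (b j))
    (hdiv : ∀ x, ∑ k, pd k (b k) x = 0) (n : Fin 3) (x : E3) :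
    ∑ k, pd k (pd n (b k)) x = 0 := by
  simp_rw [fun k => pd_comm (hb k) k n]
  rw [← pd_fun_sum (fun k => (hb k).pd k)]
  simp_rw [hdiv]
  simp [pd]

/-- The reflection `x₂ ↦ -x₂`. -/
def mirror : E3 ≃ₗᵢ[ℝ] E3 :=
  LinearIsometryEquiv.piLpCongrRight 2 fun i : Fin 3 =>
    if i = 1 then LinearIsometryEquiv.neg ℝ else LinearIsometryEquiv.refl ℝ ℝ

lemma mirror_apply (x : E3) (i : Fin 3) : mirror x i = if i = 1 then -x i else x i := by
  unfold mirror
  rw [LinearIsometryEquiv.piLpCongrRight_apply]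
  split_ifs with h <;> simp [h]

lemma rad_mirror (x : E3) : rad (mirror x) = rad x := by
  simp [rad, mirror_apply]

lemma mirror_single (i : Fin 3) : mirror (EuclideanSpace.single i 1) =
    (if i = 1 then -1 else 1 : ℝ) • EuclideanSpace.single i 1 := by
  ext j
  rw [mirror_apply]
  fin_cases i <;> fin_cases j <;> simp

/-- The mirror-symmetric part of a vector field. -/
def mirrorPart (u : E3 → E3) (x : E3) : E3 := (1 / 2 : ℝ) • (u x + mirror (u (mirror x)))

lemma contDiff_mirrorPart {u : E3 → E3} (hu : ContDiff ℝ (⊤ : ℕ∞) u) :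
    ContDiff ℝ (⊤ : ℕ∞) (mirrorPart u) :=
  (hu.add (mirror.contDiff.comp (hu.comp mirror.contDiff))).const_smul (1 / 2 : ℝ)

lemma hasCompactSupport_mirrorPart {u : E3 → E3} (hu : HasCompactSupport u) :
    HasCompactSupport (mirrorPart u) := by
  have h1 : HasCompactSupport fun x => mirror (u (mirror x)) :=
    (hu.comp_homeomorph mirror.toHomeomorph).comp_left (g := mirror) (map_zero _)
  exact (hu.add h1).comp_left (g := fun y : E3 => (1 / 2 : ℝ) • y) (by simp)

lemma isTest_apply {b : E3 → E3} (hb : ContDiff ℝ (⊤ : ℕ∞) b) (hc : HasCompactSupport b)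
    (j : Fin 3) : IsTest fun x => b x j :=
  ⟨contDiff_euclidean.1 hb j, hc.comp_left (g := fun y : E3 => y j) rfl⟩

lemma sum_pd_mirrorPart {u : E3 → E3} (hu : ContDiff ℝ (⊤ : ℕ∞) u)
    (hdiv : ∀ x : E3, ∑ i : Fin 3, pd i (fun y => u y i) x = 0) (x : E3) :
    ∑ i : Fin 3, pd i (fun y => mirrorPart u y i) x = 0 := by
  have hd : ∀ i : Fin 3, Differentiable ℝ fun y => u y i := fun i =>
    (contDiff_euclidean.1 hu i).differentiable (by simp)
  have e : ∀ i : Fin 3, pd i (fun y => mirrorPart u y i) x =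
      1 / 2 * (pd i (fun y => u y i) x + pd i (fun y => u y i) (mirror x)) := by
    intro i
    have h1 : HasFDerivAt (fun y => u (mirror y) i) _ x :=
      ((hd i) (mirror x)).hasFDerivAt.comp x mirror.toContinuousLinearEquiv.hasFDerivAt
    have h2 : HasFDerivAt (fun y => mirrorPart u y i) _ x :=
      (((hd i) x).hasFDerivAt.add (h1.const_mul (if i = 1 then -1 else 1))).const_mul (1 / 2)
        |>.congr_of_eventuallyEq (Filter.Eventually.of_forall fun y => by
          simp only [mirrorPart, PiLp.smul_apply, PiLp.add_apply, smul_eq_mul, mirror_apply,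
            Pi.add_apply]
          split_ifs <;> ring)
    have h3 : mirror.toContinuousLinearEquiv (EuclideanSpace.single i (1 : ℝ)) = _ :=
      mirror_single i
    unfold pd
    rw [h2.fderiv]
    simp only [smul_apply, add_apply,
      ContinuousLinearMap.comp_apply, smul_eq_mul, ContinuousLinearEquiv.coe_coe]
    rw [h3, map_smul, smul_eq_mul]
    split_ifs <;> ring
  simp_rw [e]
  rw [← Finset.mul_sum, Finset.sum_add_distrib, hdiv, hdiv]
  simp

lemma rad_eq_zero {x : E3} : rad x = 0 ↔ x 0 = 0 ∧ x 1 = 0 := by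
  unfold rad
  rw [Real.sqrt_eq_zero (by positivity)]
  constructor
  · intro h
    constructor <;> nlinarith [sq_nonneg (x 0), sq_nonneg (x 1)]
  · rintro ⟨h0, h1⟩
    simp [h0, h1]

lemma eq_zero_of_forall_pos {f : ℝ → ℝ} (hf : Continuous f) (h : ∀ t, 0 < t → f t = 0) :
    f 0 = 0 := by
  have := (show EqOn f (fun _ => 0) (Ioi 0) from fun t ht => h t ht).closure hf continuous_const
  exact this (by simp)

lemma swirlFreePart_eq_mirrorPart {u : E3 → E3} {ur uθ uz : ℝ → ℝ → ℝ} (hu : Continuous u)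
    (huz : Continuous fun v : ℝ × ℝ => uz v.1 v.2) (h : AxisymVec u ur uθ uz) :
    swirlFreePart ur uz = mirrorPart u := by
  ext x j
  by_cases hx : rad x = 0
  · obtain ⟨h0, h1⟩ := rad_eq_zero.1 hx
    have hm : mirror x = x := by
      ext i; rw [mirror_apply]; split_ifs with hi
      · rw [hi, h1, neg_zero]
      · rfl
    set y : ℝ → E3 := fun t => x + t • EuclideanSpace.single 0 1
    have hy0 : y 0 = x := by simp [y]
    have hyc : Continuous y := by fun_prop
    have hr : ∀ t, rad (y t) = |t| := fun t => by
      simp [rad, y, h0, h1, Real.sqrt_sq_eq_abs]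
    have hu' : ∀ i, Continuous fun t => u (y t) i := fun i => by fun_prop
    have hu'' : ∀ i, Continuous fun t => u (y (-t)) i := fun i => by fun_prop
    have hz0 : u x 0 = 0 := by
      have := eq_zero_of_forall_pos ((hu' 0).add (hu'' 0)) fun t ht => by
        have a1 := (h (y t) (by rw [hr]; positivity)).1
        have a2 := (h (y (-t)) (by rw [hr]; simpa using ht.ne')).1
        rw [hr] at a1 a2
        simp only [Pi.add_apply]
        rw [a1, a2]
        simp [y, h0, h1]
        ring
      simp only [Pi.add_apply, neg_zero, hy0] at this
      linarith
    have hz2 : u x 2 = uz 0 (x 2) := by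
      have := eq_zero_of_forall_pos ((hu' 2).sub
        (huz.comp (by fun_prop : Continuous fun t : ℝ => (t, x 2)))) fun t ht => by
        have a1 := (h (y t) (by rw [hr]; positivity)).2.2
        rw [hr, abs_of_pos ht] at a1
        simp [a1, y]
      simp only [Pi.sub_apply, hy0, Function.comp_apply] at this
      linarith
    fin_cases j <;> simp [swirlFreePart, mirrorPart, hm, hx, mirror_apply, hz0, hz2]
    ring
  · obtain ⟨a0, a1, a2⟩ := h x hx
    obtain ⟨c0, c1, c2⟩ := h (mirror x) (by rwa [rad_mirror])
    rw [rad_mirror] at c0 c1 c2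
    fin_cases j
    all_goals
      simp [mirror_apply] at c0 c1 c2
      simp [swirlFreePart, mirrorPart, mirror_apply, a0, a1, a2, c0, c1, c2]
      ring

/-- The differential of the distance to the axis. -/
def radGrad (x : E3) : E3 →L[ℝ] ℝ :=
  (x 0 / rad x) • EuclideanSpace.proj 0 + (x 1 / rad x) • EuclideanSpace.proj 1

lemma rad_sq (x : E3) : rad x ^ 2 = x 0 ^ 2 + x 1 ^ 2 := Real.sq_sqrt (by positivity)

lemma hasFDerivAt_coord (i : Fin 3) (x : E3) :
    HasFDerivAt (fun y : E3 => y i) (EuclideanSpace.proj i : E3 →L[ℝ] ℝ) x :=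
  (EuclideanSpace.proj i : E3 →L[ℝ] ℝ).hasFDerivAt

lemma hasFDerivAt_rad {x : E3} (hx : rad x ≠ 0) : HasFDerivAt rad (radGrad x) x := by
  have h0 : x 0 ^ 2 + x 1 ^ 2 ≠ 0 := by rw [← rad_sq]; positivity
  have h := (((hasFDerivAt_coord 0 x).pow 2).fun_add
    ((hasFDerivAt_coord 1 x).pow 2)).sqrt h0
  refine h.congr_fderiv ?_
  have hr : √(x 0 ^ 2 + x 1 ^ 2) = rad x := rfl
  rw [hr]
  ext v
  simp [radGrad]
  field_simp

lemma hasFDerivAt_comp_rad {U : ℝ → ℝ → ℝ} (hU : Differentiable ℝ fun v : ℝ × ℝ => U v.1 v.2)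
    {x : E3} (hx : rad x ≠ 0) :
    HasFDerivAt (fun y : E3 => U (rad y) (y 2))
      (pdr U (rad x) (x 2) • radGrad x + pdz U (rad x) (x 2) • EuclideanSpace.proj 2) x := by
  have hd := (hU (rad x, x 2)).hasFDerivAt
  have h := hd.comp x ((hasFDerivAt_rad hx).prodMk (hasFDerivAt_coord 2 x))
  have er : pdr U (rad x) (x 2) = fderiv ℝ (fun v : ℝ × ℝ => U v.1 v.2) (rad x, x 2) (1, 0) := by
    have := hd.comp_hasDerivAt (rad x)
      ((hasDerivAt_id (rad x)).prodMk (hasDerivAt_const (rad x) (x 2)))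
    exact this.deriv
  have ez : pdz U (rad x) (x 2) = fderiv ℝ (fun v : ℝ × ℝ => U v.1 v.2) (rad x, x 2) (0, 1) := by
    have := hd.comp_hasDerivAt (x 2)
      ((hasDerivAt_const (x 2) (rad x)).prodMk (hasDerivAt_id (x 2)))
    exact this.deriv
  refine h.congr_fderiv ?_
  ext v
  rw [er, ez]
  have e : ((radGrad x v, v 2) : ℝ × ℝ) = radGrad x v • (1, 0) + v 2 • (0, 1) := by simp
  change fderiv ℝ (fun v : ℝ × ℝ => U v.1 v.2) (rad x, x 2) (radGrad x v, v 2) = _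
  rw [e, map_add, map_smul, map_smul]
  simp [mul_comm]

lemma abs_coord_div_rad_le {a : Fin 3} (ha : a = 0 ∨ a = 1) (x : E3) : |x a / rad x| ≤ 1 := by
  have h0 : 0 ≤ rad x := Real.sqrt_nonneg _
  rw [abs_div, abs_of_nonneg h0]
  refine div_le_one_of_le₀ (Real.abs_le_sqrt ?_) h0
  rcases ha with rfl | rfl <;> nlinarith [sq_nonneg (x 0), sq_nonneg (x 1)]

lemma abs_radGrad_single_le (x : E3) (n : Fin 3) :
    |radGrad x (EuclideanSpace.single n 1)| ≤ 1 := by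
  have h0 := abs_coord_div_rad_le (Or.inl rfl) x
  have h1 := abs_coord_div_rad_le (Or.inr rfl) x
  fin_cases n <;> simp [radGrad, h0, h1]

lemma hasFDerivAt_coord_div_rad (a : Fin 3) {x : E3} (hx : rad x ≠ 0) :
    HasFDerivAt (fun y : E3 => y a / rad y)
      ((rad x)⁻¹ • (EuclideanSpace.proj a : E3 →L[ℝ] ℝ) - (x a / rad x ^ 2) • radGrad x) x := by
  have h : HasFDerivAt (fun y : E3 => y a / rad y) _ x := (hasFDerivAt_coord a x).mul
    ((hasDerivAt_inv hx).comp_hasFDerivAt x (hasFDerivAt_rad hx))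
  refine h.congr_fderiv ?_
  ext v
  simp
  field_simp
  ring

/-- Scalar factors of size one and gradient at most `2 / r`. -/
def IsAngular (φ : E3 → ℝ) : Prop :=
  ∀ x, rad x ≠ 0 → |φ x| ≤ 1 ∧ DifferentiableAt ℝ φ x ∧ ∀ n, |pd n φ x| ≤ 2 / rad x

lemma isAngular_coord {a : Fin 3} (ha : a = 0 ∨ a = 1) : IsAngular fun x => x a / rad x := by
  intro x hx
  have hr : 0 < rad x := (Real.sqrt_nonneg _).lt_of_ne' hx
  have h := hasFDerivAt_coord_div_rad a hx
  refine ⟨abs_coord_div_rad_le ha x, h.differentiableAt, fun n => ?_⟩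
  rw [pd, h.fderiv]
  have h1 : |(EuclideanSpace.proj a : E3 →L[ℝ] ℝ) (EuclideanSpace.single n 1)| ≤ 1 := by
    by_cases han : a = n <;> simp [han]
  have e : ((rad x)⁻¹ • (EuclideanSpace.proj a : E3 →L[ℝ] ℝ) - (x a / rad x ^ 2) • radGrad x)
      (EuclideanSpace.single n 1) = ((EuclideanSpace.proj a : E3 →L[ℝ] ℝ)
        (EuclideanSpace.single n 1) - x a / rad x * radGrad x (EuclideanSpace.single n 1)) /
        rad x := by
    rw [sub_apply, smul_apply, smul_apply, smul_eq_mul, smul_eq_mul]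
    field_simp
  rw [e, abs_div, abs_of_pos hr]
  gcongr
  refine (abs_sub _ _).trans ?_
  have h2 : |x a / rad x * radGrad x (EuclideanSpace.single n 1)| ≤ 1 := by
    rw [abs_mul]
    exact mul_le_one₀ (abs_coord_div_rad_le ha x) (abs_nonneg _) (abs_radGrad_single_le x n)
  linarith

lemma isAngular_zero : IsAngular fun _ => 0 := fun x _ =>
  ⟨by simp, differentiableAt_const _, fun n => by
    simp only [pd, fderiv_fun_const, Pi.zero_apply, zero_apply, abs_zero]
    exact div_nonneg two_pos.le (Real.sqrt_nonneg _)⟩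

lemma IsAngular.neg {φ : E3 → ℝ} (h : IsAngular φ) : IsAngular fun x => -φ x := fun x hx =>
  ⟨by rw [abs_neg]; exact (h x hx).1, (h x hx).2.1.neg, fun n => by
    have : pd n (fun x => -φ x) x = -pd n φ x := by simp [pd, fderiv_fun_neg]
    rw [this, abs_neg]
    exact (h x hx).2.2 n⟩

lemma curlEntry_swirlFreePart {ur uz : ℝ → ℝ → ℝ}
    (hur : Differentiable ℝ fun v : ℝ × ℝ => ur v.1 v.2)
    (huz : Differentiable ℝ fun v : ℝ × ℝ => uz v.1 v.2) {x : E3} (hx : rad x ≠ 0) :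
    curlEntry (fun j y => swirlFreePart ur uz y j) 0 1 x = 0 ∧
    curlEntry (fun j y => swirlFreePart ur uz y j) 2 0 x = wTheta ur uz x * (x 0 / rad x) ∧
    curlEntry (fun j y => swirlFreePart ur uz y j) 2 1 x = wTheta ur uz x * (x 1 / rad x) := by
  have hr := hasFDerivAt_comp_rad hur hx
  have h0 : HasFDerivAt (fun y => swirlFreePart ur uz y 0) _ x :=
    hr.mul (hasFDerivAt_coord_div_rad 0 hx)
  have h1 : HasFDerivAt (fun y => swirlFreePart ur uz y 1) _ x :=
    hr.mul (hasFDerivAt_coord_div_rad 1 hx)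
  have h2 : HasFDerivAt (fun y => swirlFreePart ur uz y 2) _ x := hasFDerivAt_comp_rad huz hx
  simp only [curlEntry, pd, h0.fderiv, h1.fderiv, h2.fderiv]
  refine ⟨?_, ?_, ?_⟩
  · simp [radGrad]; ring
  · simp [radGrad, wTheta]; ring
  · simp [radGrad, wTheta]; ring

lemma exists_isAngular_curlEntry {ur uz : ℝ → ℝ → ℝ}
    (hur : Differentiable ℝ fun v : ℝ × ℝ => ur v.1 v.2)
    (huz : Differentiable ℝ fun v : ℝ × ℝ => uz v.1 v.2) (k l : Fin 3) :
    ∃ φ, IsAngular φ ∧ ∀ x, rad x ≠ 0 →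
      curlEntry (fun j y => swirlFreePart ur uz y j) k l x = wTheta ur uz x * φ x := by
  have hs : ∀ (b : Fin 3 → E3 → ℝ) k l x, curlEntry b k l x = -curlEntry b l k x :=
    fun b k l x => by simp [curlEntry]
  have hd : ∀ k, ∃ φ, IsAngular φ ∧ ∀ x, rad x ≠ 0 →
      curlEntry (fun j y => swirlFreePart ur uz y j) k k x = wTheta ur uz x * φ x :=
    fun k => ⟨_, isAngular_zero, fun x _ => by simp [curlEntry]⟩
  have hz := isAngular_zero
  have h0 : IsAngular fun x => x 0 / rad x := isAngular_coord (Or.inl rfl)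
  have h1 : IsAngular fun x => x 1 / rad x := isAngular_coord (Or.inr rfl)
  have H := fun x hx => curlEntry_swirlFreePart hur huz (x := x) hx
  fin_cases k <;> fin_cases l
  · exact hd 0
  · exact ⟨_, hz, fun x hx => by simpa using (H x hx).1⟩
  · exact ⟨_, h0.neg, fun x hx => by rw [hs]; simpa using (H x hx).2.1⟩
  · exact ⟨_, hz, fun x hx => by rw [hs]; simpa using (H x hx).1⟩
  · exact hd 1
  · exact ⟨_, h1.neg, fun x hx => by rw [hs]; simpa using (H x hx).2.2⟩
  · exact ⟨_, h0, fun x hx => (H x hx).2.1⟩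
  · exact ⟨_, h1, fun x hx => (H x hx).2.2⟩
  · exact hd 2

lemma ae_rad_ne_zero : ∀ᵐ x : E3, rad x ≠ 0 := by
  have h : (volume : Measure E3)
      (LinearMap.ker (EuclideanSpace.proj 0 : E3 →L[ℝ] ℝ).toLinearMap : Set E3) = 0 := by
    refine Measure.addHaar_submodule _ _ fun h => ?_
    have : EuclideanSpace.single (0 : Fin 3) (1 : ℝ) ∈
      LinearMap.ker (EuclideanSpace.proj 0 : E3 →L[ℝ] ℝ).toLinearMap := by rw [h]; trivial
    simp at this
  refine measure_mono_null (fun x hx => ?_) h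
  simpa using (rad_eq_zero.1 (not_not.1 hx)).1

lemma continuous_rad : Continuous rad := by unfold rad; fun_prop

lemma norm_le_sum_apply (y : E3) : ‖y‖ ≤ ∑ j, |y j| := by
  have h : y = ∑ j, y j • EuclideanSpace.single j (1 : ℝ) := by
    ext k; simp [Finset.sum_apply, Pi.single_apply]
  calc ‖y‖ = ‖∑ j, y j • EuclideanSpace.single j (1 : ℝ)‖ := by rw [← h]
    _ ≤ ∑ j, ‖y j • EuclideanSpace.single j (1 : ℝ)‖ := norm_sum_le _ _
    _ = ∑ j, |y j| := by simp [norm_smul]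

lemma opNorm_le_sum_single {V : Type*} [NormedAddCommGroup V] [NormedSpace ℝ V]
    (L : E3 →L[ℝ] V) : ‖L‖ ≤ ∑ i, ‖L (EuclideanSpace.single i 1)‖ := by
  refine L.opNorm_le_bound (by positivity) fun v => ?_
  have h : v = ∑ j, v j • EuclideanSpace.single j (1 : ℝ) := by
    ext k; simp [Finset.sum_apply, Pi.single_apply]
  calc ‖L v‖ = ‖∑ j, v j • L (EuclideanSpace.single j (1 : ℝ))‖ := by
        conv_lhs => rw [h]
        simp
    _ ≤ ∑ j, ‖v j • L (EuclideanSpace.single j (1 : ℝ))‖ := norm_sum_le _ _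
    _ ≤ ∑ j, ‖L (EuclideanSpace.single j (1 : ℝ))‖ * ‖v‖ := by
        refine Finset.sum_le_sum fun j _ => ?_
        rw [norm_smul, mul_comm]
        exact mul_le_mul_of_nonneg_left (PiLp.norm_apply_le v j) (norm_nonneg _)
    _ = _ := by rw [Finset.sum_mul]

lemma fderiv_single_apply {b : E3 → E3} {x : E3} (hb : DifferentiableAt ℝ b x) (i j : Fin 3) :
    fderiv ℝ b x (EuclideanSpace.single i 1) j = pd i (fun y => b y j) x := by
  have : HasFDerivAt (fun y => b y j) _ x :=
    (EuclideanSpace.proj j : E3 →L[ℝ] ℝ).hasFDerivAt.comp x hb.hasFDerivAt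
  rw [pd, this.fderiv]
  rfl

lemma norm_fderiv_le_sum_pd {b : E3 → E3} {x : E3} (hb : DifferentiableAt ℝ b x) :
    ‖fderiv ℝ b x‖ ≤ ∑ k : Fin 3 × Fin 3, |pd k.1 (fun y => b y k.2) x| := by
  refine (opNorm_le_sum_single _).trans ?_
  rw [Fintype.sum_prod_type]
  refine Finset.sum_le_sum fun i _ => (norm_le_sum_apply _).trans (le_of_eq ?_)
  simp_rw [fderiv_single_apply hb]

lemma norm_iteratedFDeriv_two_le_sum_pd {b : E3 → E3} (hb : ContDiff ℝ 2 b) (x : E3) :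
    ‖iteratedFDeriv ℝ 2 b x‖ ≤
      ∑ k : Fin 3 × Fin 3 × Fin 3, |pd k.1 (pd k.2.1 (fun y => b y k.2.2)) x| := by
  have hd : Differentiable ℝ (fderiv ℝ b) :=
    (hb.fderiv_right (m := 1) (by norm_num)).differentiable one_ne_zero
  rw [← norm_iteratedFDeriv_fderiv, norm_iteratedFDeriv_one]
  refine (opNorm_le_sum_single _).trans ?_
  rw [Fintype.sum_prod_type]
  refine Finset.sum_le_sum fun i _ => (opNorm_le_sum_single _).trans ?_
  rw [Fintype.sum_prod_type]
  refine Finset.sum_le_sum fun n _ => (norm_le_sum_apply _).trans (le_of_eq ?_)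
  refine Finset.sum_congr rfl fun j _ => ?_
  have h1 : HasFDerivAt (fun y => fderiv ℝ b y (EuclideanSpace.single n 1)) _ x :=
    (hd x).hasFDerivAt.clm_apply (hasFDerivAt_const (EuclideanSpace.single n (1 : ℝ)) x)
  have h2 : pd n (fun y => b y j) = fun y => fderiv ℝ b y (EuclideanSpace.single n 1) j := by
    ext y; rw [fderiv_single_apply (hb.differentiable two_ne_zero y)]
  rw [h2, ← fderiv_single_apply h1.differentiableAt, h1.fderiv]
  simp

lemma eLpNorm_le_card_mul {p : ℝ≥0∞} (hp : 1 ≤ p) {ι V : Type*} [Fintype ι]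
    [NormedAddCommGroup V] {f : E3 → V} {g : ι → E3 → ℝ} (hg : ∀ i, Continuous (g i))
    (hfg : ∀ x, ‖f x‖ ≤ ∑ i, |g i x|) {A : ℝ≥0∞} (hA : ∀ i, eLpNorm (g i) p volume ≤ A) :
    eLpNorm f p volume ≤ Fintype.card ι * A := by
  calc eLpNorm f p volume ≤ eLpNorm (∑ i, fun x => |g i x|) p volume :=
        eLpNorm_mono_real fun x => by simpa using hfg x
    _ ≤ ∑ i, eLpNorm (fun x => |g i x|) p volume :=
        eLpNorm_sum_le (fun i _ => (hg i).abs.aestronglyMeasurable) hp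
    _ ≤ ∑ _i : ι, A := Finset.sum_le_sum fun i _ => by
        refine le_trans (le_of_eq ?_) (hA i)
        exact eLpNorm_norm (g i)
    _ = _ := by simp

lemma contDiff_pdz_sub_pdr {ur uz : ℝ → ℝ → ℝ}
    (hur : ContDiff ℝ (⊤ : ℕ∞) (fun v : ℝ × ℝ => ur v.1 v.2))
    (huz : ContDiff ℝ (⊤ : ℕ∞) (fun v : ℝ × ℝ => uz v.1 v.2)) :
    ContDiff ℝ 1 (fun v : ℝ × ℝ => pdz ur v.1 v.2 - pdr uz v.1 v.2) := by
  have e : ∀ v : ℝ × ℝ, pdz ur v.1 v.2 - pdr uz v.1 v.2 =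
      fderiv ℝ (fun v : ℝ × ℝ => ur v.1 v.2) v (0, 1) -
        fderiv ℝ (fun v : ℝ × ℝ => uz v.1 v.2) v (1, 0) := by
    intro v
    have h1 := ((hur.differentiable (by simp)) v).hasFDerivAt.comp_hasDerivAt_of_eq v.2
      ((hasDerivAt_const v.2 v.1).prodMk (hasDerivAt_id v.2)) rfl
    have h2 := ((huz.differentiable (by simp)) v).hasFDerivAt.comp_hasDerivAt_of_eq v.1
      ((hasDerivAt_id v.1).prodMk (hasDerivAt_const v.1 v.2)) rfl
    rw [← h1.deriv, ← h2.deriv]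
    rfl
  simp_rw [e]
  exact (((contDiff_infty.1 hur 2).fderiv_right (by norm_num)).clm_apply contDiff_const).sub
    (((contDiff_infty.1 huz 2).fderiv_right (by norm_num)).clm_apply contDiff_const)

lemma continuous_wTheta {ur uz : ℝ → ℝ → ℝ}
    (hur : ContDiff ℝ (⊤ : ℕ∞) (fun v : ℝ × ℝ => ur v.1 v.2))
    (huz : ContDiff ℝ (⊤ : ℕ∞) (fun v : ℝ × ℝ => uz v.1 v.2)) : Continuous (wTheta ur uz) :=
  (contDiff_pdz_sub_pdr hur huz).continuous.comp
    (continuous_rad.prodMk (by fun_prop : Continuous fun x : E3 => x 2))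

lemma differentiableAt_wTheta {ur uz : ℝ → ℝ → ℝ}
    (hur : ContDiff ℝ (⊤ : ℕ∞) (fun v : ℝ × ℝ => ur v.1 v.2))
    (huz : ContDiff ℝ (⊤ : ℕ∞) (fun v : ℝ × ℝ => uz v.1 v.2))
    {x : E3} (hx : rad x ≠ 0) :
    DifferentiableAt ℝ (wTheta ur uz) x :=
  (hasFDerivAt_comp_rad (U := fun r z => pdz ur r z - pdr uz r z)
    ((contDiff_pdz_sub_pdr hur huz).differentiable one_ne_zero) hx).differentiableAt

lemma eLpNorm_curlEntry_le {ur uz : ℝ → ℝ → ℝ}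
    (hur : ContDiff ℝ (⊤ : ℕ∞) (fun v : ℝ × ℝ => ur v.1 v.2))
    (huz : ContDiff ℝ (⊤ : ℕ∞) (fun v : ℝ × ℝ => uz v.1 v.2))
    (p : ℝ≥0∞) (k l : Fin 3) :
    eLpNorm (curlEntry (fun j y => swirlFreePart ur uz y j) k l) p volume ≤
      eLpNorm (wTheta ur uz) p volume := by
  obtain ⟨φ, hφ, h⟩ := exists_isAngular_curlEntry (hur.differentiable (by simp))
    (huz.differentiable (by simp)) k l
  refine eLpNorm_mono_ae (ae_rad_ne_zero.mono fun x hx => ?_)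
  rw [h x hx, norm_mul]
  exact mul_le_of_le_one_right (norm_nonneg _) (hφ x hx).1

lemma abs_pd_curlEntry_le {ur uz : ℝ → ℝ → ℝ}
    (hur : ContDiff ℝ (⊤ : ℕ∞) (fun v : ℝ × ℝ => ur v.1 v.2))
    (huz : ContDiff ℝ (⊤ : ℕ∞) (fun v : ℝ × ℝ => uz v.1 v.2))
    (n k l : Fin 3) {x : E3} (hx : rad x ≠ 0) :
    |pd n (curlEntry (fun j y => swirlFreePart ur uz y j) k l) x| ≤
      ‖fderiv ℝ (wTheta ur uz) x‖ + 2 * |wTheta ur uz x / rad x| := by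
  obtain ⟨φ, hφ, h⟩ := exists_isAngular_curlEntry (hur.differentiable (by simp))
    (huz.differentiable (by simp)) k l
  obtain ⟨h1, h2, h3⟩ := hφ x hx
  have hev : curlEntry (fun j y => swirlFreePart ur uz y j) k l =ᶠ[nhds x]
      fun y => wTheta ur uz y * φ y := by
    filter_upwards [continuous_rad.continuousAt.eventually_ne hx] with y hy using h y hy
  have hw := differentiableAt_wTheta hur huz hx
  have hr : 0 < rad x := (Real.sqrt_nonneg _).lt_of_ne' hx
  have e : pd n (curlEntry (fun j y => swirlFreePart ur uz y j) k l) x =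
      wTheta ur uz x * pd n φ x + φ x * pd n (wTheta ur uz) x := by
    rw [pd, hev.fderiv_eq, fderiv_fun_mul hw h2]
    rfl
  rw [e, add_comm]
  refine (abs_add_le _ _).trans (add_le_add ?_ ?_)
  · rw [abs_mul]
    refine (mul_le_of_le_one_left (abs_nonneg _) h1).trans ?_
    rw [pd]
    simpa using (fderiv ℝ (wTheta ur uz) x).le_opNorm (EuclideanSpace.single n 1)
  · rw [abs_mul, abs_div, abs_of_pos hr]
    refine (mul_le_mul_of_nonneg_left (h3 n) (abs_nonneg _)).trans (le_of_eq ?_)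
    ring

lemma eLpNorm_pd_curlEntry_le {ur uz : ℝ → ℝ → ℝ}
    (hur : ContDiff ℝ (⊤ : ℕ∞) (fun v : ℝ × ℝ => ur v.1 v.2))
    (huz : ContDiff ℝ (⊤ : ℕ∞) (fun v : ℝ × ℝ => uz v.1 v.2))
    {p : ℝ≥0∞} (hp : 1 ≤ p) (n k l : Fin 3) :
    eLpNorm (pd n (curlEntry (fun j y => swirlFreePart ur uz y j) k l)) p volume ≤
      2 * (eLpNorm (fun x => fderiv ℝ (wTheta ur uz) x) p volume +
        eLpNorm (fun x => wTheta ur uz x / rad x) p volume) := by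
  set w := wTheta ur uz with hw
  set v : E3 → ℝ := fun x => w x / rad x with hv
  have m1 : Measurable fun x => ‖fderiv ℝ w x‖ := (measurable_fderiv ℝ _).norm
  have m2 : Measurable fun x => ‖v x‖ :=
    ((continuous_wTheta hur huz).measurable.div continuous_rad.measurable).norm
  have e2 : eLpNorm (fun x => 2 * ‖v x‖) p volume = 2 * eLpNorm v p volume := by
    have h := eLpNorm_const_smul (2 : ℝ) (fun x => ‖v x‖) p (volume : Measure E3)
    rw [eLpNorm_norm, ← ofReal_norm, Real.norm_ofNat, ENNReal.ofReal_ofNat] at h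
    exact h
  calc _ ≤ eLpNorm ((fun x => ‖fderiv ℝ w x‖) + fun x => 2 * ‖v x‖) p volume :=
        eLpNorm_mono_ae_real (ae_rad_ne_zero.mono fun x hx =>
          abs_pd_curlEntry_le hur huz n k l hx)
    _ ≤ eLpNorm (fun x => ‖fderiv ℝ w x‖) p volume + eLpNorm (fun x => 2 * ‖v x‖) p volume :=
        eLpNorm_add_le m1.aestronglyMeasurable (m2.const_mul 2).aestronglyMeasurable hp
    _ = eLpNorm (fun x => fderiv ℝ w x) p volume + 2 * eLpNorm v p volume := by
        rw [eLpNorm_norm, e2]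
    _ ≤ 2 * eLpNorm (fun x => fderiv ℝ w x) p volume + 2 * eLpNorm v p volume :=
        add_le_add (le_mul_of_one_le_left' one_le_two) le_rfl
    _ = _ := (mul_add _ _ _).symm

/-- For `1 < p < ∞` there is `C_p > 0` such that for every smooth
divergence-free axially symmetric vector field `u = u^r e_r + u^θ e_θ + u^z e_z`
on `ℝ³` with sufficient decay, the swirl-free part `b = u^r e_r + u^z e_z`
satisfies `‖∇b‖_{L^p} ≤ C_p ‖w^θ‖_{L^p}` and
`‖∇²b‖_{L^p} ≤ C_p (‖∇w^θ‖_{L^p} + ‖w^θ/r‖_{L^p})`. -/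
theorem axisym_swirl_free_gradient_estimates (p : ℝ) (hp : 1 < p) :
    ∃ C : ℝ, 0 < C ∧
      ∀ (u : E3 → E3) (ur uθ uz : ℝ → ℝ → ℝ),
        ContDiff ℝ (⊤ : ℕ∞) u → HasCompactSupport u →
        ContDiff ℝ (⊤ : ℕ∞) (fun v : ℝ × ℝ => ur v.1 v.2) →
        ContDiff ℝ (⊤ : ℕ∞) (fun v : ℝ × ℝ => uθ v.1 v.2) →
        ContDiff ℝ (⊤ : ℕ∞) (fun v : ℝ × ℝ => uz v.1 v.2) →
        AxisymVec u ur uθ uz →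
        (∀ x : E3, (∑ i : Fin 3, pd i (fun y => u y i) x) = 0) →
        eLpNorm (fun x => fderiv ℝ (swirlFreePart ur uz) x) (ENNReal.ofReal p) volume
            ≤ ENNReal.ofReal C * eLpNorm (wTheta ur uz) (ENNReal.ofReal p) volume
          ∧
        eLpNorm (iteratedFDeriv ℝ 2 (swirlFreePart ur uz)) (ENNReal.ofReal p) volume
            ≤ ENNReal.ofReal C
              * (eLpNorm (fun x => fderiv ℝ (wTheta ur uz) x) (ENNReal.ofReal p) volume
                 + eLpNorm (fun x => wTheta ur uz x / rad x) (ENNReal.ofReal p) volume) := by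
  obtain ⟨C, hCtop, hC⟩ := exists_eLpNorm_pd_le_curlEntry hp
  have hp1 : 1 ≤ ENNReal.ofReal p := by simpa using hp.le
  have hC' : ∀ {K : ℝ≥0∞}, K ≤ 54 * C → K ≤ ENNReal.ofReal ((54 * C).toReal + 1) := by
    intro K hK
    rw [ENNReal.ofReal_add ENNReal.toReal_nonneg one_pos.le,
      ENNReal.ofReal_toReal (ENNReal.mul_ne_top (by simp) hCtop)]
    exact hK.trans le_self_add
  refine ⟨(54 * C).toReal + 1, by positivity, ?_⟩
  intro u ur uθ uz hu hc hur _ huz hax hdiv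
  have hs := swirlFreePart_eq_mirrorPart hu.continuous huz.continuous hax
  have hb : ContDiff ℝ (⊤ : ℕ∞) (swirlFreePart ur uz) := hs ▸ contDiff_mirrorPart hu
  have hbc : HasCompactSupport (swirlFreePart ur uz) := hs ▸ hasCompactSupport_mirrorPart hc
  have hbd : ∀ x, ∑ k : Fin 3, pd k (fun y => swirlFreePart ur uz y k) x = 0 :=
    hs ▸ sum_pd_mirrorPart hu hdiv
  have hbt := isTest_apply hb hbc
  have hpd : ∀ n j : Fin 3, IsTest (pd n fun y => swirlFreePart ur uz y j) :=
    fun n j => (hbt j).pd n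
  constructor
  · have h1 : ∀ k : Fin 3 × Fin 3, eLpNorm (pd k.1 fun y => swirlFreePart ur uz y k.2)
        (ENNReal.ofReal p) volume ≤ C * eLpNorm (wTheta ur uz) (ENNReal.ofReal p) volume :=
      fun k => hC (fun j y => swirlFreePart ur uz y j) hbt hbd _
        (eLpNorm_curlEntry_le hur huz _) k.1 k.2
    have h2 := eLpNorm_le_card_mul hp1 (ι := Fin 3 × Fin 3)
      (g := fun k => pd k.1 fun y => swirlFreePart ur uz y k.2) (fun k => (hpd k.1 k.2).continuous)
      (fun x => norm_fderiv_le_sum_pd (hb.differentiable (by simp) x)) h1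
    refine h2.trans ?_
    rw [← mul_assoc]
    refine mul_le_mul_left (hC' (mul_le_mul_left ?_ _)) _
    norm_num [Fintype.card_prod]
  · set A := eLpNorm (fun x => fderiv ℝ (wTheta ur uz) x) (ENNReal.ofReal p) volume
        + eLpNorm (fun x => wTheta ur uz x / rad x) (ENNReal.ofReal p) volume
    have h1 : ∀ k : Fin 3 × Fin 3 × Fin 3,
        eLpNorm (pd k.1 (pd k.2.1 fun y => swirlFreePart ur uz y k.2.2))
          (ENNReal.ofReal p) volume ≤ C * (2 * A) := fun k => by
      refine hC (fun j => pd k.2.1 fun y => swirlFreePart ur uz y j) (hpd k.2.1)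
        (sum_pd_pd_eq_zero hbt hbd k.2.1) _ (fun i j => ?_) k.1 k.2.2
      rw [curlEntry_pd hbt]
      exact eLpNorm_pd_curlEntry_le hur huz hp1 _ _ _
    have h2 := eLpNorm_le_card_mul hp1 (ι := Fin 3 × Fin 3 × Fin 3)
      (g := fun k => pd k.1 (pd k.2.1 fun y => swirlFreePart ur uz y k.2.2))
      (fun k => ((hpd k.2.1 k.2.2).pd k.1).continuous)
      (norm_iteratedFDeriv_two_le_sum_pd (contDiff_infty.1 hb 2)) h1
    refine h2.trans ?_
    rw [← mul_assoc, ← mul_assoc]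
    refine mul_le_mul_left (hC' (le_of_eq ?_)) _
    rw [mul_right_comm]
    congr 1
    norm_num [Fintype.card_prod]
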